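/- arXiv:1212.1346 — 2 statements merged into one kernel-verified Lean document; each statement's English description precedes it below -/
import Mathlib

section
/- For every m ≥ 1 there exists a polynomial p such that for every n ≥ 1 and every nondeterministic finite automaton with n states over an alphabet Σ of m letters whose accepted language contains no unary word, there exists a deterministic finite automaton over Σ with at most p(n) states that is Parikh equivalent to it. -/
/-- The Parikh map `ψ : (Fin m)^* → ℕ^m`, counting for each letter its number of
occurrences in the word. -/
def parikh {m : ℕ} (w : List (Fin m)) : Fin m → ℕ := fun i => w.count i

/-- The Parikh image `ψ(L)` of a language over the alphabet `Fin m`. -/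
def parikhImage {m : ℕ} (L : Language (Fin m)) : Set (Fin m → ℕ) :=
  parikh '' L

/-- A word is unary if all of its letters are equal to one single letter
(the empty word is unary). -/
def IsUnaryWord {α : Type*} (w : List α) : Prop :=
  ∀ c ∈ w, ∀ c' ∈ w, c = c'

namespace ParikhDFA

open scoped Classical

lemma parikh_nil {m : ℕ} : parikh ([] : List (Fin m)) = 0 := by
  funext i; simp [parikh]

lemma parikh_append {m : ℕ} (v w : List (Fin m)) : parikh (v ++ w) = parikh v + parikh w := by
  funext i; simp [parikh]

lemma parikh_cons {m : ℕ} (c : Fin m) (w : List (Fin m)) :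
    parikh (c :: w) = Pi.single c 1 + parikh w := by
  funext i
  by_cases h : i = c
  · subst h; simp [parikh, add_comm]
  · have : c ≠ i := fun e => h e.symm
    simp [parikh, h, this]

lemma parikh_le_length {m : ℕ} (w : List (Fin m)) (i : Fin m) : parikh w i ≤ w.length :=
  List.count_le_length

/-- There is a walk from `p` to `q` reading `w` and visiting all the states of `V`. -/
def RunV {α σ : Type} (A : NFA α σ) : σ → List α → σ → Set σ → Prop
  | p, [], q, V => p = q ∧ V ⊆ {p}
  | p, c :: w, q, V => ∃ r ∈ A.step p c, RunV A r w q (V \ {p})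

section runs
variable {m : ℕ} {σ : Type} (A : NFA (Fin m) σ)

lemma RunV.mono {p q : σ} {w : List (Fin m)} {V W : Set σ} (h : RunV A p w q V) (hW : W ⊆ V) :
    RunV A p w q W := by
  induction w generalizing p V W with
  | nil => exact ⟨h.1, hW.trans h.2⟩
  | cons c w ih =>
    obtain ⟨r, hr, h⟩ := h
    exact ⟨r, hr, ih h (Set.sdiff_subset_sdiff_left hW)⟩

lemma RunV.append {p r q : σ} {v w : List (Fin m)} {V : Set σ} (h : RunV A p v r ∅)
    (h' : RunV A r w q V) : RunV A p (v ++ w) q V := by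
  induction v generalizing p V with
  | nil => obtain ⟨rfl, _⟩ := h; exact h'
  | cons c v ih =>
    obtain ⟨s, hs, h⟩ := h
    exact ⟨s, hs, ih (h.mono A (Set.empty_subset _)) (h'.mono A Set.sdiff_subset)⟩

lemma RunV.of_diff {p q : σ} {w : List (Fin m)} {V : Set σ} (h : RunV A p w q (V \ {p})) :
    RunV A p w q V := by
  cases w with
  | nil => exact ⟨h.1, fun x hx => by
      by_contra hne
      exact hne (h.2 ⟨hx, hne⟩)⟩
  | cons c w =>
    obtain ⟨r, hr, h⟩ := h
    refine ⟨r, hr, h.mono A ?_⟩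
    intro x hx; exact ⟨hx, hx.2⟩

lemma RunV.insert {p q s : σ} {w c : List (Fin m)} {V : Set σ} (h : RunV A p w q V) (hs : s ∈ V)
    (hc : RunV A s c s ∅) : ∃ w', parikh w' = parikh w + parikh c ∧ RunV A p w' q V := by
  induction w generalizing p V with
  | nil =>
    have := h.2 hs
    simp only [Set.mem_singleton_iff] at this
    subst this
    exact ⟨c ++ [], by rw [parikh_append, add_comm], RunV.append A hc h⟩
  | cons a w ih =>
    by_cases e : s = p
    · subst e
      exact ⟨c ++ a :: w, by rw [parikh_append, add_comm], RunV.append A hc h⟩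
    · obtain ⟨r, hr, h⟩ := h
      obtain ⟨w', hw, h'⟩ := ih h ⟨hs, e⟩
      exact ⟨a :: w', by rw [parikh_cons, parikh_cons, hw, add_assoc], r, hr, h'⟩

/-- vectors of short cycles anchored in `V` -/
def Cyc (n : ℕ) (V : Set σ) : Set (Fin m → ℕ) :=
  {x | ∃ s ∈ V, ∃ c : List (Fin m), RunV A s c s ∅ ∧ c.length ≤ n ∧ parikh c = x}

lemma Cyc.mono {n : ℕ} {V W : Set σ} (h : V ⊆ W) : Cyc A n V ⊆ Cyc A n W := by
  rintro x ⟨s, hs, c, hc⟩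
  exact ⟨s, h hs, c, hc⟩

lemma RunV.insert_span {p q : σ} {n : ℕ} {V : Set σ} {y : Fin m → ℕ}
    (hy : y ∈ Submodule.span ℕ (Cyc A n V)) {w : List (Fin m)} (h : RunV A p w q V) :
    ∃ w', parikh w' = parikh w + y ∧ RunV A p w' q V := by
  induction hy using Submodule.span_induction generalizing w with
  | mem x hx =>
    obtain ⟨s, hs, c, hc, _, rfl⟩ := hx
    exact h.insert A hs hc
  | zero => exact ⟨w, by simp, h⟩
  | add x y _ _ hx hy =>
    obtain ⟨w1, e1, h1⟩ := hx h
    obtain ⟨w2, e2, h2⟩ := hy h1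
    exact ⟨w2, by rw [e2, e1, add_assoc], h2⟩
  | smul a x _ hx =>
    induction a with
    | zero => exact ⟨w, by simp, h⟩
    | succ a ih =>
      obtain ⟨w1, e1, h1⟩ := ih
      obtain ⟨w2, e2, h2⟩ := hx h1
      exact ⟨w2, by rw [e2, e1, add_assoc, add_smul, one_smul], h2⟩

lemma run_states {p q : σ} {w : List (Fin m)} (h : RunV A p w q ∅) :
    ∃ s : ℕ → σ, s 0 = p ∧ s w.length = q ∧
      ∀ i j, i ≤ j → j ≤ w.length → RunV A (s i) ((w.drop i).take (j - i)) (s j) ∅ := by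
  induction w generalizing p with
  | nil =>
    refine ⟨fun _ => p, rfl, h.1, fun i j hi hj => ?_⟩
    simp [RunV]
  | cons c w ih =>
    obtain ⟨r, hr, h⟩ := h
    obtain ⟨s, h0, h1, hs⟩ := ih (h.mono A (Set.empty_subset _))
    refine ⟨fun k => Nat.casesOn k p s, rfl, h1, ?_⟩
    intro i j hij hj
    cases i with
    | zero =>
      cases j with
      | zero => simp [RunV]
      | succ j =>
        have := hs 0 j (Nat.zero_le _) (by simpa using hj)
        simp only [List.drop_zero, Nat.sub_zero, List.take_succ_cons] at this ⊢
        exact ⟨s 0, by rw [h0]; exact hr, this.mono A (by simp)⟩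
    | succ i =>
      cases j with
      | zero => omega
      | succ j =>
        have := hs i j (by omega) (by simpa using hj)
        simpa using this

lemma decomp [Fintype σ] {n : ℕ} (hn : Fintype.card σ = n) (q : σ) :
    ∀ (L : ℕ) (w : List (Fin m)) (p : σ) (V : Finset σ), w.length ≤ L → p ∈ V →
      RunV A p w q ∅ → ∃ (w' : List (Fin m)) (V' : Finset σ), V ⊆ V' ∧
        RunV A p w' q ((V' : Set σ) \ V) ∧ w'.length ≤ (n - V.card) * n + n ∧
        ∃ y ∈ Submodule.span ℕ (Cyc A n (V' : Set σ)), parikh w = parikh w' + y := by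
  intro L
  induction L with
  | zero =>
    intro w p V hw hp h
    refine ⟨w, V, le_rfl, by simpa using h, by omega, 0, Submodule.zero_mem _, by simp⟩
  | succ L ih =>
    intro w p V hw hp h
    by_cases hlen : w.length ≤ n
    · exact ⟨w, V, le_rfl, by simpa using h, by omega, 0, Submodule.zero_mem _, by simp⟩
    push Not at hlen
    obtain ⟨s, h0, h1, hs⟩ := run_states A h
    by_cases hout : ∃ i ≤ n, s i ∉ V
    · obtain ⟨i, hi, hiV⟩ := hout
      have hi0 : i ≠ 0 := by rintro rfl; exact hiV (h0 ▸ hp)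
      have r1 := hs 0 i (by omega) (by omega)
      have r2 := hs i w.length (by omega) le_rfl
      rw [h0] at r1
      rw [h1, List.take_of_length_le (by simp)] at r2
      simp only [List.drop_zero, Nat.sub_zero] at r1
      obtain ⟨w', V', hV, hr, hl, y, hy, e⟩ := ih (w.drop i) (s i) (insert (s i) V)
        (by simp; omega) (by simp) r2
      refine ⟨w.take i ++ w', V', (Finset.subset_insert _ _).trans hV, ?_, ?_, y, hy, ?_⟩
      · refine RunV.append A r1 (RunV.of_diff A (hr.mono A ?_))
        rintro x ⟨⟨hx, hx2⟩, hx3⟩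
        refine ⟨hx, ?_⟩
        simp only [Finset.coe_insert, Set.mem_insert_iff, not_or]
        exact ⟨hx3, hx2⟩
      · have hc : (insert (s i) V).card = V.card + 1 := Finset.card_insert_of_notMem hiV
        have hc2 : (insert (s i) V).card ≤ n := hn ▸ Finset.card_le_univ _
        rw [hc] at hl hc2
        obtain ⟨d, hd⟩ := Nat.exists_eq_add_of_le hc2
        have e1 : n - V.card = d + 1 := by omega
        have e2 : n - (V.card + 1) = d := by omega
        rw [e2] at hl
        rw [e1, add_mul, one_mul]
        simp only [List.length_append, List.length_take]
        have : min i w.length ≤ n := by omega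
        omega
      · rw [parikh_append, add_assoc, ← e, ← parikh_append, List.take_append_drop]
    · push Not at hout
      obtain ⟨a, b, hab, heq⟩ := Fintype.exists_ne_map_eq_of_card_lt
        (fun i : Fin (n + 1) => s i) (by simp [hn])
      have key : ∃ i j, i < j ∧ j ≤ n ∧ s i = s j := by
        rcases lt_or_gt_of_ne hab with hlt | hlt
        · exact ⟨a, b, hlt, by omega, heq⟩
        · exact ⟨b, a, hlt, by omega, heq.symm⟩
      obtain ⟨i, j, hij, hj, heq⟩ := key
      have r1 := hs 0 i (by omega) (by omega)
      have r2 := hs i j (by omega) (by omega)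
      have r3 := hs j w.length (by omega) le_rfl
      rw [h0] at r1
      rw [h1, List.take_of_length_le (by simp)] at r3
      simp only [List.drop_zero, Nat.sub_zero] at r1
      rw [← heq] at r2 r3
      obtain ⟨w', V', hV, hr, hl, y, hy, e⟩ := ih (w.take i ++ w.drop j) p V
        (by simp; omega) hp (RunV.append A r1 r3)
      refine ⟨w', V', hV, hr, hl, y + parikh ((w.drop i).take (j - i)), ?_, ?_⟩
      · refine Submodule.add_mem _ hy (Submodule.subset_span ?_)
        exact ⟨s i, hV (hout i (by omega)), _, r2, by simp; omega, rfl⟩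
      · rw [← add_assoc, ← e, parikh_append]
        have e3 : w = w.take i ++ ((w.drop i).take (j - i) ++ w.drop j) := by
          have : w.drop j = (w.drop i).drop (j - i) := by
            rw [List.drop_drop]; congr 1; omega
          rw [this, List.take_append_drop, List.take_append_drop]
        conv_lhs => rw [e3]
        rw [parikh_append, parikh_append]
        abel

lemma runV_iff_path {p q : σ} {w : List (Fin m)} :
    RunV A p w q ∅ ↔ Nonempty (A.Path p q w) := by
  induction w generalizing p with
  | nil =>
    constructor
    · rintro ⟨rfl, _⟩; exact ⟨NFA.Path.nil p⟩
    · rintro ⟨h⟩; cases h; exact ⟨rfl, by simp⟩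
  | cons c w ih =>
    constructor
    · rintro ⟨r, hr, h⟩
      obtain ⟨P⟩ := ih.1 (h.mono A (by simp))
      exact ⟨NFA.Path.cons _ _ _ _ _ hr P⟩
    · rintro ⟨h⟩
      cases h with
      | cons t _ _ _ _ ht P => exact ⟨t, ht, (ih.2 ⟨P⟩).mono A (by simp)⟩

/-- Step 1a. -/
lemma image_decomp [Fintype σ] {n : ℕ} (hn : Fintype.card σ = n) {x : Fin m → ℕ}
    (hx : x ∈ parikhImage A.accepts) :
    ∃ (b : Fin m → ℕ) (C : Set (Fin m → ℕ)), (∀ i, b i ≤ n * n + n) ∧ (∀ v ∈ C, ∀ i, v i ≤ n) ∧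
      (∃ y ∈ Submodule.span ℕ C, x = b + y) ∧
      ∀ y ∈ Submodule.span ℕ C, b + y ∈ parikhImage A.accepts := by
  obtain ⟨w, hw, rfl⟩ := hx
  obtain ⟨p, hp, q, hq, hP⟩ := NFA.accepts_iff_exists_path.1 hw
  obtain ⟨w', V', hV, hr, hl, y, hy, e⟩ := decomp A hn q w.length w p {p} le_rfl (by simp)
    ((runV_iff_path A).2 hP)
  refine ⟨parikh w', Cyc A n V', ?_, ?_, ⟨y, hy, e⟩, ?_⟩
  · intro i
    refine (parikh_le_length w' i).trans (hl.trans ?_)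
    gcongr
    omega
  · rintro v ⟨s, _, c, _, hc, rfl⟩ i
    exact (parikh_le_length c i).trans hc
  · intro y hy
    obtain ⟨w2, e2, h2⟩ := RunV.insert_span A hy
      (RunV.of_diff A (by simpa using hr))
    exact ⟨w2, NFA.accepts_iff_exists_path.2
      ⟨p, hp, q, hq, (runV_iff_path A).1 (h2.mono A (by simp))⟩, e2⟩

end runs

/-- The linear set with offset `u` and periods `P c`. -/
def Lin {m : ℕ} (u : Fin m → ℕ) (P : Fin m → Fin m → ℕ) : Set (Fin m → ℕ) :=
  {x | ∃ k : Fin m → ℕ, x = u + ∑ c, k c • P c}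

/-- The period attached to a letter is zero or contains that letter. -/
def Good {m : ℕ} (P : Fin m → Fin m → ℕ) : Prop := ∀ c, P c ≠ 0 → P c c ≠ 0

/-- Threshold for the exchange argument. -/
def thr (m n : ℕ) : ℕ := ((m + 1) * (n + 1)) ^ m + 1

lemma pigeon {m n : ℕ} {ι : Type} (T : Finset ι) (g : ι → Fin m → ℕ) (N : Finset (Fin m))
    (hg : ∀ i ∈ T, ∀ c, g i c ≤ n) (hN : ∀ i ∈ T, ∀ c ∉ N, g i c = 0)
    (hcard : T.card = N.card + 1) :
    ∃ x y : ι → ℕ, x ≠ y ∧ (∀ i ∉ T, x i = 0) ∧ (∀ i ∉ T, y i = 0) ∧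
      (∀ i, x i ≤ thr m n) ∧ (∀ i, y i ≤ thr m n) ∧
      ∑ i ∈ T, x i • g i = ∑ i ∈ T, y i • g i := by
  set K := thr m n with hK
  set B := (m + 1) * (n + 1) with hB
  have hs : N.card ≤ m := by simpa using Finset.card_le_univ N
  have hKB : K = B ^ m + 1 := rfl
  have hBpos : 0 < B := by positivity
  have hKpos : 0 < K := by rw [hK]; unfold thr; omega
  have hbound : ∀ z : T → Fin K, ∀ c, (∑ i : T, (z i : ℕ) * g i c) < B * K := by
    intro z c
    have h1 : (∑ i : T, (z i : ℕ) * g i c) ≤ ∑ i : T, K * n := by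
      refine Finset.sum_le_sum fun i _ => Nat.mul_le_mul (z i).2.le (hg i i.2 c)
    have h2 : ∑ i : T, K * n = (N.card + 1) * (K * n) := by simp [hcard]
    have h3 : (N.card + 1) * (K * n) ≤ (m + 1) * (K * n) := by gcongr
    have h4 : (m + 1) * (K * n) < (m + 1) * (K * (n + 1)) := by gcongr; omega
    calc _ ≤ _ := h1
      _ < (m + 1) * (K * (n + 1)) := by rw [h2]; omega
      _ = B * K := by rw [hB]; ring
  obtain ⟨x, y, hxy, he⟩ := Fintype.exists_ne_map_eq_of_card_lt
    (fun (z : T → Fin K) (c : N) => (⟨∑ i : T, (z i : ℕ) * g i c, hbound z c⟩ : Fin (B * K)))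
    (by
      simp only [Fintype.card_pi, Fintype.card_fin, Finset.prod_const, Finset.card_univ,
        Fintype.card_coe, hcard]
      rw [mul_pow, pow_succ, mul_comm]
      have : B ^ N.card ≤ B ^ m := Nat.pow_le_pow_right hBpos hs
      have : B ^ N.card < K := by omega
      gcongr)
  refine ⟨fun i => if h : i ∈ T then x ⟨i, h⟩ else 0, fun i => if h : i ∈ T then y ⟨i, h⟩ else 0,
    ?_, ?_, ?_, ?_, ?_, ?_⟩
  · intro h
    apply hxy
    funext i
    have := congrFun h i.1
    simpa [Fin.ext_iff] using this
  · intro i hi; simp [hi]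
  · intro i hi; simp [hi]
  · intro i; dsimp only; split_ifs
    · exact (x _).2.le
    · omega
  · intro i; dsimp only; split_ifs
    · exact (y _).2.le
    · omega
  · funext c
    simp only [Finset.sum_apply, Pi.smul_apply, smul_eq_mul]
    rw [← Finset.sum_coe_sort T (fun i => (if h : i ∈ T then (x ⟨i, h⟩ : ℕ) else 0) * g i c),
      ← Finset.sum_coe_sort T (fun i => (if h : i ∈ T then (y ⟨i, h⟩ : ℕ) else 0) * g i c)]
    simp only [Finset.coe_mem, dite_true]
    by_cases hc : c ∈ N
    · have := congrFun he ⟨c, hc⟩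
      simpa [Fin.ext_iff] using this
    · refine Finset.sum_congr rfl fun i _ => ?_
      rw [hN i i.2 c hc, mul_zero, mul_zero]

/-- Choose a lexicographically minimal representation: its big support has distinct
representatives. -/
lemma exists_sdr {m n k : ℕ} (g : Fin k → Fin m → ℕ) (hg : ∀ i c, g i c ≤ n) (c₀ : Fin k → ℕ) :
    ∃ c : Fin k → ℕ, ∑ i, c i • g i = ∑ i, c₀ i • g i ∧
      ∃ f : {i // thr m n ≤ c i} → Fin m, Function.Injective f ∧ ∀ i, g i.1 (f i) ≠ 0 := by
  obtain ⟨c, hc, hmin⟩ := WellFounded.has_min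
    (wellFounded_lt (α := Lex (Fin k → ℕ)))
    {c | ∑ i, ofLex c i • g i = ∑ i, c₀ i • g i} ⟨toLex c₀, rfl⟩
  refine ⟨ofLex c, hc, ?_⟩
  have hall := (Finset.all_card_le_biUnion_card_iff_exists_injective
    (fun i : {i // thr m n ≤ ofLex c i} => Finset.univ.filter (fun a => g i.1 a ≠ 0))).1 ?_
  · obtain ⟨f, hf, hf2⟩ := hall
    exact ⟨f, hf, fun i => by simpa using hf2 i⟩
  intro S
  by_contra hlt
  push Not at hlt
  set N := S.biUnion (fun i : {i // thr m n ≤ ofLex c i} =>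
    Finset.univ.filter (fun a => g i.1 a ≠ 0)) with hN
  obtain ⟨T', hT', hcard⟩ := Finset.exists_subset_card_eq (Nat.succ_le_of_lt hlt)
  have hc1 : (T'.map (Function.Embedding.subtype _)).card = N.card + 1 := by
    rw [Finset.card_map, hcard]
  obtain ⟨x, y, hxy, hx0, hy0, hx, hy, he⟩ := pigeon (n := n)
    (T'.map (Function.Embedding.subtype _)) g N
    (fun i _ => hg i) (by
      intro i hi a ha
      by_contra hne
      obtain ⟨j, hj, rfl⟩ := Finset.mem_map.1 hi
      exact ha (Finset.mem_biUnion.2 ⟨j, hT' hj, Finset.mem_filter.2 ⟨Finset.mem_univ _, hne⟩⟩)) hc1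
  set T := T'.map (Function.Embedding.subtype _) with hT
  have hbig : ∀ i ∈ T, thr m n ≤ ofLex c i := by
    intro i hi
    obtain ⟨j, hj, rfl⟩ := Finset.mem_map.1 hi
    exact j.2
  -- the exchange step
  have main : ∀ x y : Fin k → ℕ, (∀ i ∉ T, x i = 0) → (∀ i ∉ T, y i = 0) →
      (∀ i, x i ≤ thr m n) → ∑ i ∈ T, x i • g i = ∑ i ∈ T, y i • g i →
      ¬ (toLex y < toLex x) := by
    intro x y hx0 hy0 hx he hlt
    have hxc : ∀ i, x i ≤ ofLex c i := by
      intro i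
      by_cases hi : i ∈ T
      · exact (hx i).trans (hbig i hi)
      · rw [hx0 i hi]; omega
    have ex : ∑ i ∈ T, x i • g i = ∑ i, x i • g i :=
      Finset.sum_subset (Finset.subset_univ _) fun i _ hi => by rw [hx0 i hi, zero_smul]
    have ey : ∑ i ∈ T, y i • g i = ∑ i, y i • g i :=
      Finset.sum_subset (Finset.subset_univ _) fun i _ hi => by rw [hy0 i hi, zero_smul]
    refine hmin (toLex (fun i => ofLex c i - x i + y i)) ?_ ?_
    · change ∑ i, _ • g i = _
      rw [← hc]
      simp only [ofLex_toLex, add_smul, Finset.sum_add_distrib]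
      rw [← ey, ← he, ex, ← Finset.sum_add_distrib]
      refine Finset.sum_congr rfl fun i _ => ?_
      rw [← add_smul, Nat.sub_add_cancel (hxc i)]
    · obtain ⟨i, hi, hi2⟩ := hlt
      refine ⟨i, fun j hj => ?_, ?_⟩
      · have := hi j hj
        have := hxc j
        simp only [Pi.toLex_apply] at *
        change ofLex c j - x j + y j = ofLex c j
        omega
      · have := hxc i
        simp only [Pi.toLex_apply] at *
        change ofLex c i - x i + y i < ofLex c i
        omega
  rcases lt_trichotomy (toLex x) (toLex y) with h | h | h
  · exact main y x hy0 hx0 hy he.symm h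
  · exact hxy (toLex.injective h)
  · exact main x y hx0 hy0 hx he h

lemma caratheodory {m n k : ℕ} (g : Fin k → Fin m → ℕ) (hg : ∀ i c, g i c ≤ n) {x : Fin m → ℕ}
    (hx : x ∈ Submodule.span ℕ (Set.range g)) :
    ∃ (r : Fin m → ℕ) (P : Fin m → Fin m → ℕ), r ∈ Submodule.span ℕ (Set.range g) ∧
      (∀ a, P a ∈ Submodule.span ℕ (Set.range g)) ∧ Good P ∧ (∀ a b, P a b ≤ n) ∧
      (∀ a, r a ≤ k * (thr m n * n)) ∧ x ∈ Lin r P := by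
  obtain ⟨c₀, hc₀⟩ := (Submodule.mem_span_range_iff_exists_fun ℕ).1 hx
  obtain ⟨c, hc, f, hf, hf2⟩ := exists_sdr g hg c₀
  have hgm : ∀ i, g i ∈ Submodule.span ℕ (Set.range g) := fun i =>
    Submodule.subset_span ⟨i, rfl⟩
  refine ⟨∑ i with ¬ thr m n ≤ c i, c i • g i, Function.extend f (fun i => g i.1) 0,
    Submodule.sum_mem _ fun i _ => Submodule.smul_mem _ _ (hgm i), ?_, ?_, ?_, ?_,
    Function.extend f (fun i => c i.1) 0, ?_⟩
  · intro a
    by_cases h : ∃ i, f i = a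
    · obtain ⟨i, rfl⟩ := h
      rw [hf.extend_apply]; exact hgm _
    · rw [Function.extend_apply' _ _ _ h]; exact Submodule.zero_mem _
  · intro a ha
    by_cases h : ∃ i, f i = a
    · obtain ⟨i, rfl⟩ := h
      rw [hf.extend_apply]; exact hf2 i
    · rw [Function.extend_apply' _ _ _ h] at ha; exact absurd rfl ha
  · intro a b
    by_cases h : ∃ i, f i = a
    · obtain ⟨i, rfl⟩ := h
      rw [hf.extend_apply]; exact hg _ _
    · rw [Function.extend_apply' _ _ _ h]; simp
  · intro a
    rw [Finset.sum_apply]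
    refine (Finset.sum_le_card_nsmul _ _ (thr m n * n) ?_).trans ?_
    · intro i hi
      simp only [Finset.mem_filter, Finset.mem_univ, true_and, not_le] at hi
      exact Nat.mul_le_mul hi.le (hg i a)
    · rw [smul_eq_mul]
      gcongr
      simpa using Finset.card_le_univ (Finset.univ.filter (fun i => ¬ thr m n ≤ c i))
  · rw [← hc₀, ← hc]
    rw [← Finset.sum_filter_not_add_sum_filter Finset.univ (fun i => thr m n ≤ c i)]
    congr 1
    rw [← Fintype.sum_of_injective f hf (fun i => c i.1 • g i.1)]
    · exact Finset.sum_subtype _ (by simp) _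
    · intro a ha
      rw [Function.extend_apply' _ _ _ (by simpa using ha)]
      simp
    · intro i
      rw [hf.extend_apply, hf.extend_apply]

/-- Bound on the offsets. -/
def offB (m n : ℕ) : ℕ := n * n + n + (n + 1) ^ m * (thr m n * n)

/-- Step 1. -/
lemma image_pieces {m n : ℕ} {σ : Type} [Fintype σ] (A : NFA (Fin m) σ)
    (hn : Fintype.card σ = n) {x : Fin m → ℕ} (hx : x ∈ parikhImage A.accepts) :
    ∃ (u : Fin m → ℕ) (P : Fin m → Fin m → ℕ), (∀ a, u a ≤ offB m n) ∧ (∀ a b, P a b ≤ n) ∧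
      Good P ∧ x ∈ Lin u P ∧ Lin u P ⊆ parikhImage A.accepts := by
  obtain ⟨b, C, hb, hC, ⟨y, hy, rfl⟩, himg⟩ := image_decomp A hn hx
  have hsub : C ⊆ (Fintype.piFinset (fun _ : Fin m => Finset.range (n + 1)) : Finset _) := by
    intro v hv
    simp only [Finset.mem_coe, Fintype.mem_piFinset, Finset.mem_range]
    intro i
    have := hC v hv i
    omega
  have hfin : C.Finite := (Finset.finite_toSet _).subset hsub
  obtain ⟨D, rfl⟩ := hfin.exists_finset_coe
  have hk : D.card ≤ (n + 1) ^ m := by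
    have := Finset.card_le_card (Finset.coe_subset.1 hsub)
    simpa [Fintype.card_piFinset] using this
  have hr : Set.range (fun i : Fin D.card => (D.equivFin.symm i : Fin m → ℕ)) = (D : Set _) := by
    ext v
    constructor
    · rintro ⟨i, rfl⟩; exact (D.equivFin.symm i).2
    · intro hv; exact ⟨D.equivFin ⟨v, hv⟩, by simp⟩
  rw [← hr] at hy
  obtain ⟨r, P, hr1, hP1, hgood, hP, hr2, k, hk2⟩ := caratheodory (n := n) _
    (fun i c => hC _ (D.equivFin.symm i).2 c) hy
  rw [hr] at hr1 hP1
  refine ⟨b + r, P, ?_, hP, hgood, ⟨k, by rw [hk2, add_assoc]⟩, ?_⟩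
  · intro a
    have h1 := hb a
    have h2 := hr2 a
    have h3 : D.card * (thr m n * n) ≤ (n + 1) ^ m * (thr m n * n) := by gcongr
    unfold offB
    simp only [Pi.add_apply]
    omega
  · rintro _ ⟨k, rfl⟩
    rw [add_assoc]
    exact himg _ (Submodule.add_mem _ hr1
      (Submodule.sum_mem _ fun c _ => Submodule.smul_mem _ _ (hP1 c)))

/-- `X` is the Parikh image of a DFA with at most `k` states. -/
def HasDFA {m : ℕ} (k : ℕ) (X : Set (Fin m → ℕ)) : Prop :=
  ∃ (σ' : Type) (_ : Fintype σ') (B : DFA (Fin m) σ'),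
    Fintype.card σ' ≤ k ∧ parikhImage B.accepts = X

lemma HasDFA.mono {m k l : ℕ} {X : Set (Fin m → ℕ)} (h : HasDFA k X) (hkl : k ≤ l) :
    HasDFA l X := by
  obtain ⟨σ', i, B, hc, e⟩ := h
  exact ⟨σ', i, B, hc.trans hkl, e⟩

lemma hasDFA_of_inv {m : ℕ} {τ : Type} (B : DFA (Fin m) τ) (Inv : τ → Prop) (S : Finset τ)
    (hS : ∀ s, Inv s → s ∈ S) (h0 : Inv B.start) (hstep : ∀ s c, Inv s → Inv (B.step s c)) :
    HasDFA S.card (parikhImage B.accepts) := by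
  have hinj : Function.Injective (fun s : {s // Inv s} => (⟨s.1, hS s.1 s.2⟩ : S)) := by
    intro s t h
    simpa [Subtype.ext_iff] using h
  have : Finite {s // Inv s} := Finite.of_injective _ hinj
  let ft : Fintype {s // Inv s} := Fintype.ofFinite _
  let B' : DFA (Fin m) {s // Inv s} :=
    { step := fun s c => ⟨B.step s.1 c, hstep s.1 c s.2⟩
      start := ⟨B.start, h0⟩
      accept := {s | s.1 ∈ B.accept} }
  refine ⟨{s // Inv s}, ft, B', ?_, ?_⟩
  · have := Fintype.card_le_of_injective _ hinj
    simpa using this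
  · have key : ∀ (w : List (Fin m)) (s : {s // Inv s}),
        (B'.evalFrom s w).1 = B.evalFrom s.1 w := by
      intro w
      induction w with
      | nil => intro s; rfl
      | cons c w ih => intro s; exact ih (B'.step s c)
    congr 1
    ext w
    change (B'.evalFrom B'.start w).1 ∈ B.accept ↔ B.evalFrom B.start w ∈ B.accept
    rw [key]

lemma hasDFA_iUnion {m k : ℕ} {ι : Type} [Fintype ι] (X : ι → Set (Fin m → ℕ))
    (h : ∀ i, HasDFA k (X i)) : HasDFA (k ^ Fintype.card ι) (⋃ i, X i) := by
  choose σ' ft B hc e using h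
  let B' : DFA (Fin m) (∀ i, σ' i) :=
    { step := fun s c i => (B i).step (s i) c
      start := fun i => (B i).start
      accept := {s | ∃ i, s i ∈ (B i).accept} }
  refine ⟨∀ i, σ' i, inferInstance, B', ?_, ?_⟩
  · rw [Fintype.card_pi]
    exact Finset.prod_le_pow_card _ _ _ fun i _ => hc i
  · have key : ∀ (w : List (Fin m)) (s : ∀ i, σ' i) (i : ι),
        B'.evalFrom s w i = (B i).evalFrom (s i) w := by
      intro w
      induction w with
      | nil => intro s i; rfl
      | cons c w ih => intro s i; exact ih (B'.step s c) i
    ext x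
    simp only [Set.mem_iUnion, ← e]
    constructor
    · rintro ⟨w, ⟨i, hi⟩, rfl⟩
      refine ⟨i, w, ?_, rfl⟩
      rw [key] at hi
      exact hi
    · rintro ⟨i, w, hi, rfl⟩
      refine ⟨w, ⟨i, ?_⟩, rfl⟩
      rw [key]
      exact hi

/-- The box of vectors bounded by `M`. -/
def box (m M : ℕ) : Finset (Fin m → ℕ) := Fintype.piFinset (fun _ => Finset.range (M + 1))

lemma mem_box {m M : ℕ} {v : Fin m → ℕ} : v ∈ box m M ↔ ∀ i, v i ≤ M := by
  simp [box]

lemma card_box (m M : ℕ) : (box m M).card = (M + 1) ^ m := by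
  simp [box, Fintype.card_piFinset]

lemma exists_word {m : ℕ} (v : Fin m → ℕ) : ∃ w : List (Fin m), parikh w = v := by
  refine ⟨(∑ i, Multiset.replicate (v i) i).toList, ?_⟩
  funext j
  rw [parikh, ← Multiset.coe_count, Multiset.coe_toList, Multiset.count_sum']
  simp [Multiset.count_replicate]

/-- The counting automaton. -/
noncomputable def countDFA (m M : ℕ) (F : Set (Fin m → ℕ)) : DFA (Fin m) (Option (Fin m → ℕ)) where
  step s c := match s with
    | none => none
    | some v => if v + Pi.single c 1 ∈ box m M then some (v + Pi.single c 1) else none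
  start := some 0
  accept := {s | ∃ v ∈ F, s = some v}

lemma countDFA_evalFrom_none {m M : ℕ} (F : Set (Fin m → ℕ)) (w : List (Fin m)) :
    (countDFA m M F).evalFrom none w = none := by
  induction w with
  | nil => rfl
  | cons c w ih => exact ih

lemma countDFA_evalFrom {m M : ℕ} (F : Set (Fin m → ℕ)) (w : List (Fin m)) (v : Fin m → ℕ)
    (hv : v ∈ box m M) :
    (countDFA m M F).evalFrom (some v) w =
      if v + parikh w ∈ box m M then some (v + parikh w) else none := by
  induction w generalizing v with
  | nil => simp [parikh_nil, hv]
  | cons c w ih =>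
    rw [DFA.evalFrom_cons, parikh_cons, ← add_assoc]
    by_cases h : v + Pi.single c 1 ∈ box m M
    · rw [← ih _ h]
      simp [countDFA, h]
    · have h2 : v + Pi.single c 1 + parikh w ∉ box m M := by
        intro h2
        apply h
        rw [mem_box] at h2 ⊢
        intro i
        have := h2 i
        simp only [Pi.add_apply] at this ⊢
        omega
      rw [if_neg h2]
      have : (countDFA m M F).step (some v) c = none := by simp [countDFA, h]
      rw [this, countDFA_evalFrom_none]

lemma hasDFA_finite {m M : ℕ} (F : Set (Fin m → ℕ)) (hF : ∀ v ∈ F, ∀ i, v i ≤ M) :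
    HasDFA ((M + 1) ^ m + 1) F := by
  have h := hasDFA_of_inv (countDFA m M F) (fun s => ∀ v, s = some v → v ∈ box m M)
    (Finset.insertNone (box m M)) (by
      intro s hs
      rw [Finset.mem_insertNone]
      intro v hv; exact hs v hv) (by
      intro v hv
      have : v = 0 := (Option.some.inj hv).symm
      subst this
      exact mem_box.2 fun i => Nat.zero_le _) (by
      intro s c hs v hv
      cases s with
      | none => simp [countDFA] at hv
      | some u =>
        simp only [countDFA] at hv
        split_ifs at hv with h
        exact (Option.some.inj hv) ▸ h)
  rw [Finset.card_insertNone, card_box] at h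
  convert h using 1
  have h0 : (0 : Fin m → ℕ) ∈ box m M := mem_box.2 fun i => Nat.zero_le _
  ext x
  constructor
  · intro hx
    obtain ⟨w, rfl⟩ := exists_word x
    refine ⟨w, ?_, rfl⟩
    change (countDFA m M F).evalFrom (some 0) w ∈ (countDFA m M F).accept
    rw [countDFA_evalFrom F w 0 h0, zero_add, if_pos (mem_box.2 (hF _ hx))]
    exact ⟨_, hx, rfl⟩
  · rintro ⟨w, hw, rfl⟩
    change (countDFA m M F).evalFrom (some 0) w ∈ (countDFA m M F).accept at hw
    rw [countDFA_evalFrom F w 0 h0, zero_add] at hw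
    obtain ⟨v, hv, e⟩ := hw
    split_ifs at e
    exact (Option.some.inj e) ▸ hv

/-- The automaton first reads `a ^ i b`, selecting the `i`-th linear set, then reads the rest of
the offset in any order, then loops. -/
noncomputable def loopDFA {m : ℕ} (a b : Fin m) (N : ℕ) (I : Set ℕ) (u : ℕ → Fin m → ℕ)
    (P : ℕ → Fin m → Fin m → ℕ) : DFA (Fin m) (Option (ℕ ⊕ ℕ × (Fin m → ℕ))) where
  step s c := match s with
    | none => none
    | some (Sum.inl i) =>
      if c = a then (if i + 1 < N then some (Sum.inl (i + 1)) else none)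
      else if c = b ∧ i ∈ I then some (Sum.inr (i, u i - Pi.single a i - Pi.single b 1))
      else none
    | some (Sum.inr (i, v)) =>
      if v = 0 then
        (if P i c c = 0 then none else some (Sum.inr (i, P i c - Pi.single c 1)))
      else if v c = 0 then none else some (Sum.inr (i, v - Pi.single c 1))
  start := some (Sum.inl 0)
  accept := {s | ∃ i, s = some (Sum.inr (i, 0))}

section loop
variable {m : ℕ} (a b : Fin m) (N : ℕ) (I : Set ℕ) (u : ℕ → Fin m → ℕ)
    (P : ℕ → Fin m → Fin m → ℕ)

lemma loop_none (w : List (Fin m)) : (loopDFA a b N I u P).evalFrom none w = none := by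
  induction w with
  | nil => rfl
  | cons c w ih => exact ih

lemma single_le {v : Fin m → ℕ} {c : Fin m} {k : ℕ} (h : k ≤ v c) : Pi.single c k ≤ v := by
  intro i
  by_cases e : i = c
  · subst e; simpa using h
  · simp [e]

lemma single_sub {v : Fin m → ℕ} {c : Fin m} (h : v c ≠ 0) :
    Pi.single c 1 + (v - Pi.single c 1) = v :=
  add_tsub_cancel_of_le (single_le (Nat.one_le_iff_ne_zero.2 h))

lemma lin_of_mem {v : Fin m → ℕ} {Q : Fin m → Fin m → ℕ} {x : Fin m → ℕ} :
    x ∈ Lin v Q ↔ ∃ y ∈ Submodule.span ℕ (Set.range Q), x = v + y := by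
  constructor
  · rintro ⟨k, rfl⟩
    exact ⟨_, (Submodule.mem_span_range_iff_exists_fun ℕ).2 ⟨k, rfl⟩, rfl⟩
  · rintro ⟨y, hy, rfl⟩
    obtain ⟨k, rfl⟩ := (Submodule.mem_span_range_iff_exists_fun ℕ).1 hy
    exact ⟨k, rfl⟩

lemma loop_sound (w : List (Fin m)) (i : ℕ) (v : Fin m → ℕ)
    (h : (loopDFA a b N I u P).evalFrom (some (Sum.inr (i, v))) w ∈ (loopDFA a b N I u P).accept) :
    parikh w ∈ Lin v (P i) := by
  induction w generalizing v with
  | nil =>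
    obtain ⟨j, hj⟩ := h
    simp only [DFA.evalFrom_nil, Option.some.injEq, Sum.inr.injEq, Prod.mk.injEq] at hj
    rw [parikh_nil, hj.2]
    exact ⟨0, by simp⟩
  | cons c w ih =>
    rw [DFA.evalFrom_cons] at h
    have hnone : ∀ s, s = none → (loopDFA a b N I u P).evalFrom s w ∈
        (loopDFA a b N I u P).accept → False := by
      rintro s rfl hs
      rw [loop_none] at hs
      obtain ⟨j, hj⟩ := hs
      cases hj
    by_cases hv : v = 0
    · by_cases hp : P i c c = 0
      · exact (hnone _ (by simp [loopDFA, hv, hp]) h).elim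
      · have e : (loopDFA a b N I u P).step (some (Sum.inr (i, v))) c =
          some (Sum.inr (i, P i c - Pi.single c 1)) := by simp [loopDFA, hv, hp]
        rw [e] at h
        obtain ⟨y, hy, e2⟩ := lin_of_mem.1 (ih _ h)
        refine lin_of_mem.2 ⟨P i c + y, Submodule.add_mem _ (Submodule.subset_span ⟨c, rfl⟩) hy, ?_⟩
        rw [parikh_cons, e2, ← add_assoc, single_sub hp, hv, zero_add]
    · by_cases hp : v c = 0
      · exact (hnone _ (by simp [loopDFA, hv, hp]) h).elim
      · have e : (loopDFA a b N I u P).step (some (Sum.inr (i, v))) c =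
          some (Sum.inr (i, v - Pi.single c 1)) := by simp [loopDFA, hv, hp]
        rw [e] at h
        obtain ⟨y, hy, e2⟩ := lin_of_mem.1 (ih _ h)
        refine lin_of_mem.2 ⟨y, hy, ?_⟩
        rw [parikh_cons, e2, ← add_assoc, single_sub hp]

lemma loop_consume (i : ℕ) (w : List (Fin m)) :
    (loopDFA a b N I u P).evalFrom (some (Sum.inr (i, parikh w))) w = some (Sum.inr (i, 0)) := by
  induction w with
  | nil => simp [parikh_nil]
  | cons c w ih =>
    rw [DFA.evalFrom_cons]
    have h1 : parikh (c :: w) c ≠ 0 := by simp [parikh_cons]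
    have h0 : parikh (c :: w) ≠ 0 := fun h => h1 (by rw [h]; rfl)
    have e : (loopDFA a b N I u P).step (some (Sum.inr (i, parikh (c :: w)))) c =
        some (Sum.inr (i, parikh (c :: w) - Pi.single c 1)) := by
      simp [loopDFA, h0, h1]
    rw [e]
    have : parikh (c :: w) - Pi.single c 1 = parikh w := by
      rw [parikh_cons, add_tsub_cancel_left]
    rw [this, ih]

lemma loop_complete (i : ℕ) (hgood : Good (P i)) (y : Fin m → ℕ)
    (hy : y ∈ Submodule.span ℕ (Set.range (P i))) :
    ∃ w, parikh w = y ∧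
      (loopDFA a b N I u P).evalFrom (some (Sum.inr (i, 0))) w = some (Sum.inr (i, 0)) := by
  have hadd : ∀ y z : Fin m → ℕ,
      (∃ w, parikh w = y ∧
      (loopDFA a b N I u P).evalFrom (some (Sum.inr (i, 0))) w = some (Sum.inr (i, 0))) →
      (∃ w, parikh w = z ∧
      (loopDFA a b N I u P).evalFrom (some (Sum.inr (i, 0))) w = some (Sum.inr (i, 0))) →
      (∃ w, parikh w = y + z ∧
      (loopDFA a b N I u P).evalFrom (some (Sum.inr (i, 0))) w = some (Sum.inr (i, 0))) := by
    rintro _ _ ⟨w, rfl, h⟩ ⟨w', rfl, h'⟩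
    exact ⟨w ++ w', parikh_append _ _, by rw [DFA.evalFrom_of_append, h, h']⟩
  have hzero : (∃ w, parikh w = (0 : Fin m → ℕ) ∧
      (loopDFA a b N I u P).evalFrom (some (Sum.inr (i, 0))) w = some (Sum.inr (i, 0))) :=
    ⟨[], parikh_nil, rfl⟩
  induction hy using Submodule.span_induction with
  | mem x hx =>
    obtain ⟨c, rfl⟩ := hx
    by_cases h0 : P i c = 0
    · rw [h0]; exact hzero
    · have h1 := hgood c h0
      obtain ⟨w, hw⟩ := exists_word (P i c - Pi.single c 1)
      refine ⟨c :: w, by rw [parikh_cons, hw, single_sub h1], ?_⟩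
      rw [DFA.evalFrom_cons]
      have e : (loopDFA a b N I u P).step (some (Sum.inr (i, 0))) c =
          some (Sum.inr (i, P i c - Pi.single c 1)) := by simp [loopDFA, h1]
      rw [e, ← hw, loop_consume]
  | zero => exact hzero
  | add x y _ _ hx hy => exact hadd _ _ hx hy
  | smul k x _ hx =>
    induction k with
    | zero => rw [zero_smul]; exact hzero
    | succ k ih => rw [add_smul, one_smul]; exact hadd _ _ ih hx

lemma loop_start_sound (hab : a ≠ b) (hua : ∀ i ∈ I, i ≤ u i a) (hub : ∀ i ∈ I, u i b ≠ 0)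
    (w : List (Fin m)) (i : ℕ)
    (h : (loopDFA a b N I u P).evalFrom (some (Sum.inl i)) w ∈ (loopDFA a b N I u P).accept) :
    ∃ j ∈ I, parikh w + Pi.single a i ∈ Lin (u j) (P j) := by
  induction w generalizing i with
  | nil =>
    obtain ⟨j, hj⟩ := h
    simp at hj
  | cons c w ih =>
    rw [DFA.evalFrom_cons] at h
    have hnone : ∀ s, s = none → (loopDFA a b N I u P).evalFrom s w ∈
        (loopDFA a b N I u P).accept → False := by
      rintro s rfl hs
      rw [loop_none] at hs
      obtain ⟨j, hj⟩ := hs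
      cases hj
    by_cases hc : c = a
    · by_cases hN : i + 1 < N
      · have e : (loopDFA a b N I u P).step (some (Sum.inl i)) c = some (Sum.inl (i + 1)) := by
          simp [loopDFA, hc, hN]
        rw [e] at h
        obtain ⟨j, hj, hx⟩ := ih _ h
        refine ⟨j, hj, ?_⟩
        convert hx using 1
        rw [parikh_cons, hc, Pi.single_add]
        abel
      · exact (hnone _ (by simp [loopDFA, hc, hN]) h).elim
    · by_cases hb : c = b ∧ i ∈ I
      · have e : (loopDFA a b N I u P).step (some (Sum.inl i)) c =
            some (Sum.inr (i, u i - Pi.single a i - Pi.single b 1)) := by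
          simp [loopDFA, hb, hab.symm]
        rw [e] at h
        obtain ⟨y, hy, e2⟩ := lin_of_mem.1 (loop_sound a b N I u P w _ _ h)
        refine ⟨i, hb.2, lin_of_mem.2 ⟨y, hy, ?_⟩⟩
        rw [parikh_cons, e2, hb.1, ← add_assoc, single_sub]
        · rw [add_right_comm, tsub_add_cancel_of_le (single_le (hua i hb.2))]
        · simpa [hab.symm] using hub i hb.2
      · exact (hnone _ (by simp [loopDFA, hc, hb]) h).elim

lemma loop_read_as (k i : ℕ) (hN : i + k < N) :
    (loopDFA a b N I u P).evalFrom (some (Sum.inl i)) (List.replicate k a) =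
      some (Sum.inl (i + k)) := by
  induction k generalizing i with
  | zero => rfl
  | succ k ih =>
    rw [List.replicate_succ, DFA.evalFrom_cons]
    have e : (loopDFA a b N I u P).step (some (Sum.inl i)) a = some (Sum.inl (i + 1)) := by
      have : i + 1 < N := by omega
      simp [loopDFA, this]
    rw [e, ih _ (by omega)]
    congr 2
    omega

lemma parikh_replicate (k : ℕ) (c : Fin m) : parikh (List.replicate k c) = Pi.single c k := by
  induction k with
  | zero => simp [parikh_nil]
  | succ k ih => rw [List.replicate_succ, parikh_cons, ih, ← Pi.single_add, add_comm]

lemma hasDFA_loop {M : ℕ} (hN : 0 < N) (hab : a ≠ b) (hI : ∀ i ∈ I, i < N)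
    (hua : ∀ i ∈ I, i ≤ u i a) (hub : ∀ i ∈ I, u i b ≠ 0)
    (hu : ∀ i ∈ I, ∀ c, u i c ≤ M) (hP : ∀ i ∈ I, ∀ c d, P i c d ≤ M)
    (hgood : ∀ i ∈ I, Good (P i)) :
    HasDFA (N + N * (M + 1) ^ m + 1) (⋃ i ∈ I, Lin (u i) (P i)) := by
  have h := hasDFA_of_inv (loopDFA a b N I u P)
    (fun s => (∀ i, s = some (Sum.inl i) → i < N) ∧
      (∀ i v, s = some (Sum.inr (i, v)) → i ∈ I ∧ v ∈ box m M))
    (Finset.insertNone ((Finset.range N).disjSum (Finset.range N ×ˢ box m M))) (by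
      rintro s ⟨h1, h2⟩
      rw [Finset.mem_insertNone]
      rintro (i | ⟨i, v⟩) hs
      · simpa using h1 i hs
      · have := h2 i v hs
        simpa using ⟨hI i this.1, this.2⟩) (by
      refine ⟨fun i hi => ?_, fun i v hi => ?_⟩
      · simp only [loopDFA, Option.some.injEq, Sum.inl.injEq] at hi; omega
      · simp [loopDFA] at hi) (by
      have hbox : ∀ v z : Fin m → ℕ, (∀ i, v i ≤ M) → v - z ∈ box m M := by
        intro v z hv
        rw [mem_box]
        intro i
        have := hv i
        simp only [Pi.sub_apply]
        omega
      rintro (_ | i | ⟨i, v⟩) c ⟨h1, h2⟩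
      · simp [loopDFA]
      · simp only [loopDFA]
        split_ifs with c1 c2 c3
        · simpa using c2
        · simp
        · simp only [Option.some.injEq, reduceCtorEq, Sum.inr.injEq, Prod.mk.injEq]
          refine ⟨fun _ h => h.elim, ?_⟩
          rintro j v ⟨rfl, rfl⟩
          refine ⟨c3.2, ?_⟩
          rw [tsub_tsub]
          exact hbox _ _ (hu _ c3.2)
        · simp
      · obtain ⟨hi, hv⟩ := h2 i v rfl
        simp only [loopDFA]
        split_ifs with c1 c2 c3
        · simp
        · simp only [Option.some.injEq, reduceCtorEq, Sum.inr.injEq, Prod.mk.injEq]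
          refine ⟨fun _ h => h.elim, ?_⟩
          rintro j v ⟨rfl, rfl⟩
          exact ⟨hi, hbox _ _ (hP _ hi c)⟩
        · simp
        · simp only [Option.some.injEq, reduceCtorEq, Sum.inr.injEq, Prod.mk.injEq]
          refine ⟨fun _ h => h.elim, ?_⟩
          rintro j v ⟨rfl, rfl⟩
          exact ⟨hi, hbox _ _ (mem_box.1 hv)⟩)
  rw [Finset.card_insertNone, Finset.card_disjSum, Finset.card_product, card_box,
    Finset.card_range] at h
  convert h using 1
  ext x
  simp only [Set.mem_iUnion, exists_prop]
  constructor
  · rintro ⟨i, hi, hx⟩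
    obtain ⟨y, hy, rfl⟩ := lin_of_mem.1 hx
    obtain ⟨w1, hw1⟩ := exists_word (u i - Pi.single a i - Pi.single b 1)
    obtain ⟨w2, rfl, hw2⟩ := loop_complete a b N I u P i (hgood i hi) y hy
    refine ⟨List.replicate i a ++ (b :: (w1 ++ w2)), ?_, ?_⟩
    · change (loopDFA a b N I u P).evalFrom (some (Sum.inl 0)) _ ∈ (loopDFA a b N I u P).accept
      rw [DFA.evalFrom_of_append, loop_read_as a b N I u P i 0 (by have := hI i hi; omega),
        DFA.evalFrom_cons]
      have e : (loopDFA a b N I u P).step (some (Sum.inl (0 + i))) b =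
            some (Sum.inr (i, u i - Pi.single a i - Pi.single b 1)) := by
          simp [loopDFA, hi, hab.symm]
      rw [e, DFA.evalFrom_of_append, ← hw1, loop_consume, hw2]
      exact ⟨i, rfl⟩
    · rw [parikh_append, parikh_cons, parikh_append, parikh_replicate, hw1,
        show ∀ p q r s : Fin m → ℕ, p + (q + (r + s)) = p + (q + r) + s from
          fun p q r s => by abel, single_sub, add_tsub_cancel_of_le (single_le (hua i hi))]
      simpa [hab.symm] using hub i hi
  · rintro ⟨w, hw, rfl⟩
    obtain ⟨j, hj, hx⟩ := loop_start_sound a b N I u P hab hua hub w 0 hw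
    exact ⟨j, hj, by simpa using hx⟩

end loop

section split
variable {m : ℕ}

lemma lin_split {u : Fin m → ℕ} {P : Fin m → Fin m → ℕ} (K : ℕ) {x : Fin m → ℕ}
    (hx : x ∈ Lin u P) : x ∈ Lin (u + ∑ c, K • P c) P ∨
      ∃ c, P c ≠ 0 ∧ ∃ j < K, x ∈ Lin (u + j • P c) (Function.update P c 0) := by
  obtain ⟨k, rfl⟩ := hx
  by_cases h : ∃ c, P c ≠ 0 ∧ k c < K
  · right
    obtain ⟨c, hc, hk⟩ := h
    refine ⟨c, hc, k c, hk, k, ?_⟩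
    rw [add_assoc]
    congr 1
    rw [← Finset.add_sum_erase _ _ (Finset.mem_univ c),
      ← Finset.add_sum_erase _ (fun i => k i • Function.update P c 0 i) (Finset.mem_univ c)]
    simp only [Function.update_self, smul_zero, zero_add]
    congr 1
    refine Finset.sum_congr rfl fun i hi => ?_
    rw [Function.update_of_ne (Finset.ne_of_mem_erase hi)]
  · left
    push Not at h
    refine ⟨fun c => k c - K, ?_⟩
    rw [add_assoc, ← Finset.sum_add_distrib]
    congr 1
    refine Finset.sum_congr rfl fun c _ => ?_
    by_cases hc : P c = 0
    · simp [hc]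
    · rw [← add_smul, Nat.add_sub_cancel' (h c hc)]

lemma lin_top_subset (u : Fin m → ℕ) (P : Fin m → Fin m → ℕ) (K : ℕ) :
    Lin (u + ∑ c, K • P c) P ⊆ Lin u P := by
  rintro _ ⟨k, rfl⟩
  refine ⟨fun c => K + k c, ?_⟩
  simp only [add_smul, Finset.sum_add_distrib, add_assoc]

lemma lin_low_subset (u : Fin m → ℕ) (P : Fin m → Fin m → ℕ) (c : Fin m) (j : ℕ) :
    Lin (u + j • P c) (Function.update P c 0) ⊆ Lin u P := by
  intro x hx
  obtain ⟨y, hy, rfl⟩ := lin_of_mem.1 hx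
  refine lin_of_mem.2 ⟨j • P c + y, Submodule.add_mem _
    (Submodule.smul_mem _ _ (Submodule.subset_span ⟨c, rfl⟩)) ?_, by rw [add_assoc]⟩
  refine Submodule.span_le.2 ?_ hy
  rintro _ ⟨i, rfl⟩
  by_cases h : i = c
  · subst h; simp
  · rw [Function.update_of_ne h]; exact Submodule.subset_span ⟨i, rfl⟩

/-- Admissible linear sets of dimension at most `d` and size at most `M`. -/
structure Piece (M d : ℕ) (q : (Fin m → ℕ) × (Fin m → Fin m → ℕ)) : Prop where
  off : ∀ c, q.1 c ≤ M
  per : ∀ c c', q.2 c c' ≤ M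
  good : Good q.2
  card : (Finset.univ.filter (fun c => q.2 c ≠ 0)).card ≤ d
  nonunary : ∃ a b, a ≠ b ∧ q.1 a ≠ 0 ∧ q.1 b ≠ 0

/-- The number of pieces of size at most `M`. -/
def numP (m M : ℕ) : ℕ := (M + 1) ^ m * ((M + 1) ^ m) ^ m

/-- Size of the new offsets. -/
def newM (m M : ℕ) : ℕ := M + m * (numP m M * M)

lemma numP_pos (m M : ℕ) : 0 < numP m M := by unfold numP; positivity

lemma exists_code (m M : ℕ) :
    ∃ (e : (Fin m → ℕ) × (Fin m → Fin m → ℕ) → ℕ) (g : ℕ → (Fin m → ℕ) × (Fin m → Fin m → ℕ)),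
      ∀ q : (Fin m → ℕ) × (Fin m → Fin m → ℕ), (∀ c, q.1 c ≤ M) → (∀ c c', q.2 c c' ≤ M) →
        e q < numP m M ∧ g (e q) = q := by
  set S : Finset ((Fin m → ℕ) × (Fin m → Fin m → ℕ)) :=
    box m M ×ˢ Fintype.piFinset (fun _ : Fin m => box m M) with hS
  have hcard : S.card = numP m M := by
    rw [hS, Finset.card_product, Fintype.card_piFinset, card_box]
    simp [numP]
  refine ⟨fun q => if h : q ∈ S then S.equivFin ⟨q, h⟩ else 0,
    fun i => if h : i < S.card then (S.equivFin.symm ⟨i, h⟩ : _ × _) else default, ?_⟩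
  intro q h1 h2
  have hq : q ∈ S := by
    rw [hS, Finset.mem_product, Fintype.mem_piFinset]
    exact ⟨mem_box.2 h1, fun c => mem_box.2 (h2 c)⟩
  simp only [hq, dite_true]
  refine ⟨hcard ▸ Fin.is_lt _, ?_⟩
  simp

lemma step2_succ (d M k : ℕ) (Ps : Set ((Fin m → ℕ) × (Fin m → Fin m → ℕ)))
    (hPs : ∀ q ∈ Ps, Piece M (d + 1) q)
    (ih : ∀ Qs : Set ((Fin m → ℕ) × (Fin m → Fin m → ℕ)), (∀ q ∈ Qs, Piece (newM m M) d q) →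
      HasDFA k (⋃ q ∈ Qs, Lin q.1 q.2)) :
    HasDFA ((k + (numP m M + numP m M * (newM m M + 1) ^ m + 1)) ^
      Fintype.card (Option {ab : Fin m × Fin m // ab.1 ≠ ab.2})) (⋃ q ∈ Ps, Lin q.1 q.2) := by
  obtain ⟨e, g, heg⟩ := exists_code m M
  set K := numP m M with hK
  have hnM : newM m M = M + m * (K * M) := rfl
  let Low : Set ((Fin m → ℕ) × (Fin m → Fin m → ℕ)) :=
    {q | ∃ r ∈ Ps, (r.2 = 0 ∧ q = r) ∨
      ∃ c, r.2 c ≠ 0 ∧ ∃ j < K, q = (r.1 + j • r.2 c, Function.update r.2 c 0)}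
  let I : Fin m × Fin m → Set ℕ := fun ab =>
    {i | ∃ q ∈ Ps, e q = i ∧ q.2 ab.1 ≠ 0 ∧ q.1 ab.2 ≠ 0}
  let U : ℕ → Fin m → ℕ := fun i => (g i).1 + ∑ c, K • (g i).2 c
  let X : Option {ab : Fin m × Fin m // ab.1 ≠ ab.2} → Set (Fin m → ℕ) := fun o => match o with
    | none => ⋃ q ∈ Low, Lin q.1 q.2
    | some ab => ⋃ i ∈ I ab.1, Lin (U i) (g i).2
  have hX : (⋃ q ∈ Ps, Lin q.1 q.2) = ⋃ o, X o := by
    ext x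
    simp only [Set.mem_iUnion, exists_prop]
    constructor
    · rintro ⟨q, hq, hx⟩
      have hp := hPs q hq
      by_cases h0 : q.2 = 0
      · refine ⟨none, ?_⟩
        simp only [X, Set.mem_iUnion, exists_prop]
        exact ⟨q, ⟨q, hq, Or.inl ⟨h0, rfl⟩⟩, hx⟩
      · rcases lin_split K hx with hx | ⟨c, hc, j, hj, hx⟩
        · obtain ⟨a, ha⟩ := Function.ne_iff.1 h0
          have hb : ∃ b, a ≠ b ∧ q.1 b ≠ 0 := by
            obtain ⟨b, b', hbb, h1, h2⟩ := hp.nonunary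
            by_cases hab : a = b
            · exact ⟨b', fun h => hbb (hab.symm.trans h), h2⟩
            · exact ⟨b, hab, h1⟩
          obtain ⟨b, hab, hb⟩ := hb
          refine ⟨some ⟨(a, b), hab⟩, ?_⟩
          simp only [X, Set.mem_iUnion, exists_prop]
          refine ⟨e q, ⟨q, hq, rfl, ha, hb⟩, ?_⟩
          simp only [U, (heg q hp.off hp.per).2]
          exact hx
        · refine ⟨none, ?_⟩
          simp only [X, Set.mem_iUnion, exists_prop]
          exact ⟨_, ⟨q, hq, Or.inr ⟨c, hc, j, hj, rfl⟩⟩, hx⟩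
    · rintro ⟨o, hx⟩
      cases o with
      | none =>
        simp only [X, Set.mem_iUnion, exists_prop] at hx
        obtain ⟨q, ⟨r, hr, ⟨_, rfl⟩ | ⟨c, hc, j, hj, rfl⟩⟩, hx⟩ := hx
        · exact ⟨q, hr, hx⟩
        · exact ⟨r, hr, lin_low_subset _ _ _ _ hx⟩
      | some ab =>
        simp only [X, Set.mem_iUnion, exists_prop] at hx
        obtain ⟨i, ⟨q, hq, rfl, h1, h2⟩, hx⟩ := hx
        have hp := hPs q hq
        simp only [U, (heg q hp.off hp.per).2] at hx
        exact ⟨q, hq, lin_top_subset _ _ _ hx⟩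
  rw [hX]
  refine hasDFA_iUnion X fun o => ?_
  cases o with
  | none =>
    refine HasDFA.mono (ih Low ?_) (Nat.le_add_right _ _)
    rintro q ⟨r, hr, ⟨h0, rfl⟩ | ⟨c, hc, j, hj, rfl⟩⟩
    · have hp := hPs q hr
      refine ⟨fun c => (hp.off c).trans (Nat.le_add_right _ _),
        fun c c' => (hp.per c c').trans (Nat.le_add_right _ _), hp.good, ?_, hp.nonunary⟩
      simp [h0]
    · have hp := hPs r hr
      refine ⟨fun c' => ?_, fun c₁ c₂ => ?_, fun c' hc' => ?_, ?_, ?_⟩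
      · have h1 := hp.off c'
        have h2 : j * r.2 c c' ≤ K * M := Nat.mul_le_mul hj.le (hp.per c c')
        have h3 : K * M ≤ m * (K * M) := Nat.le_mul_of_pos_left _ (Fin.pos c)
        simp only [Pi.add_apply, Pi.smul_apply, smul_eq_mul, hnM]
        omega
      · by_cases h : c₁ = c
        · subst h; simp
        · simp only [Function.update_of_ne h]
          exact (hp.per c₁ c₂).trans (Nat.le_add_right _ _)
      · by_cases h : c' = c
        · subst h; simp at hc'
        · simp only [Function.update_of_ne h] at hc' ⊢
          exact hp.good c' hc'
      · have hsub : (Finset.univ.filter (fun i => Function.update r.2 c 0 i ≠ 0)) ⊆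
            (Finset.univ.filter (fun i => r.2 i ≠ 0)).erase c := by
          intro i hi
          simp only [Finset.mem_filter, Finset.mem_univ, true_and, Finset.mem_erase] at hi ⊢
          by_cases h : i = c
          · subst h; simp at hi
          · rw [Function.update_of_ne h] at hi
            exact ⟨h, hi⟩
        have h1 := Finset.card_le_card hsub
        rw [Finset.card_erase_of_mem (by simpa using hc)] at h1
        have h2 := hp.card
        exact h1.trans (by omega)
      · obtain ⟨a, b, hab, ha, hb⟩ := hp.nonunary
        refine ⟨a, b, hab, ?_, ?_⟩ <;> simp only [Pi.add_apply] <;> omega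
  | some ab =>
    have hinv : ∀ i ∈ I ab.1, Piece M (d + 1) (g i) ∧ i < K ∧ (g i).2 ab.1.1 ≠ 0 ∧
        (g i).1 ab.1.2 ≠ 0 := by
      rintro i ⟨q, hq, rfl, h1, h2⟩
      have hp := hPs q hq
      have h3 := heg q hp.off hp.per
      rw [h3.2]
      exact ⟨hp, h3.1, h1, h2⟩
    refine HasDFA.mono (hasDFA_loop ab.1.1 ab.1.2 K (I ab.1) U (fun i => (g i).2)
      (M := newM m M) (numP_pos m M) ab.2 (fun i hi => (hinv i hi).2.1) ?_ ?_ ?_ ?_ ?_)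
      (Nat.le_add_left _ _)
    · intro i hi
      obtain ⟨hp, hlt, h1, h2⟩ := hinv i hi
      have h3 := hp.good _ h1
      have h4 : K * (g i).2 ab.1.1 ab.1.1 ≤ ∑ c, K * (g i).2 c ab.1.1 :=
        Finset.single_le_sum (f := fun c => K * (g i).2 c ab.1.1) (fun _ _ => Nat.zero_le _)
          (Finset.mem_univ ab.1.1)
      have h5 : K ≤ K * (g i).2 ab.1.1 ab.1.1 :=
        Nat.le_mul_of_pos_right _ (Nat.pos_of_ne_zero h3)
      simp only [U, Pi.add_apply, Finset.sum_apply, Pi.smul_apply, smul_eq_mul]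
      omega
    · intro i hi
      obtain ⟨hp, hlt, h1, h2⟩ := hinv i hi
      simp only [U, Pi.add_apply]
      omega
    · intro i hi c
      obtain ⟨hp, hlt, h1, h2⟩ := hinv i hi
      have h3 : ∑ c', K * (g i).2 c' c ≤ ∑ _c' : Fin m, K * M :=
        Finset.sum_le_sum fun c' _ => Nat.mul_le_mul le_rfl (hp.per c' c)
      have h4 := hp.off c
      simp only [Finset.sum_const, Finset.card_univ, Fintype.card_fin, smul_eq_mul] at h3
      simp only [U, Pi.add_apply, Finset.sum_apply, Pi.smul_apply, smul_eq_mul, hnM]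
      omega
    · intro i hi c c'
      exact ((hinv i hi).1.per c c').trans (Nat.le_add_right _ _)
    · intro i hi
      exact (hinv i hi).1.good

lemma step2 (m d : ℕ) : ∃ p : Polynomial ℕ, ∀ (M : ℕ)
    (Ps : Set ((Fin m → ℕ) × (Fin m → Fin m → ℕ))), (∀ q ∈ Ps, Piece M d q) →
      HasDFA (p.eval M) (⋃ q ∈ Ps, Lin q.1 q.2) := by
  induction d with
  | zero =>
    refine ⟨(Polynomial.X + 1) ^ m + 1, fun M Ps hPs => ?_⟩
    have h := hasDFA_finite (M := M) (Prod.fst '' Ps) (by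
      rintro _ ⟨q, hq, rfl⟩
      exact (hPs q hq).off)
    convert h using 1
    · simp
    · ext x
      simp only [Set.mem_iUnion, exists_prop, Set.mem_image]
      refine exists_congr fun q => and_congr_right fun hq => ?_
      have h0 : ∀ c, q.2 c = 0 := by
        have := (hPs q hq).card
        simpa using this
      constructor
      · rintro ⟨k, rfl⟩; simp [h0]
      · rintro rfl; exact ⟨0, by simp⟩
  | succ d ih =>
    obtain ⟨p, hp⟩ := ih
    let Kp : Polynomial ℕ := (Polynomial.X + 1) ^ m * ((Polynomial.X + 1) ^ m) ^ m
    let Mp : Polynomial ℕ := Polynomial.X + Polynomial.C m * (Kp * Polynomial.X)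
    refine ⟨(p.comp Mp + (Kp + Kp * (Mp + 1) ^ m + 1)) ^
      Fintype.card (Option {ab : Fin m × Fin m // ab.1 ≠ ab.2}), fun M Ps hPs => ?_⟩
    have hKp : Kp.eval M = numP m M := by simp [Kp, numP]
    have hMp : Mp.eval M = newM m M := by simp [Mp, newM, hKp]
    have h := step2_succ d M _ Ps hPs (fun Qs hQs => hp (newM m M) Qs hQs)
    convert h using 1
    rw [Polynomial.eval_pow, Polynomial.eval_add, Polynomial.eval_comp, hMp]
    simp only [Polynomial.eval_add, Polynomial.eval_mul, Polynomial.eval_pow, hKp, hMp,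
      Polynomial.eval_one]

end split

lemma main (m : ℕ) : ∃ p : Polynomial ℕ, ∀ n : ℕ, ∀ (σ : Type) [Fintype σ], Fintype.card σ = n →
      ∀ A : NFA (Fin m) σ, (∀ w ∈ A.accepts, ¬ IsUnaryWord w) →
      HasDFA (p.eval n) (parikhImage A.accepts) := by
  obtain ⟨p, hp⟩ := step2 m m
  let Tp : Polynomial ℕ := ((Polynomial.C m + 1) * (Polynomial.X + 1)) ^ m + 1
  let Op : Polynomial ℕ := Polynomial.X * Polynomial.X + Polynomial.X +
    (Polynomial.X + 1) ^ m * (Tp * Polynomial.X)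
  refine ⟨p.comp Op, fun n σ _ hn A hA => ?_⟩
  have hTp : Tp.eval n = thr m n := by simp [Tp, thr]
  have hOp : Op.eval n = offB m n := by simp [Op, offB, hTp]
  rw [Polynomial.eval_comp, hOp]
  have h := hp (offB m n) {q | (∀ a, q.1 a ≤ offB m n) ∧ (∀ a b, q.2 a b ≤ n) ∧ Good q.2 ∧
    Lin q.1 q.2 ⊆ parikhImage A.accepts} ?_
  · convert h using 1
    ext x
    simp only [Set.mem_iUnion, exists_prop]
    constructor
    · intro hx
      obtain ⟨u, P, h1, h2, h3, h4, h5⟩ := image_pieces A hn hx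
      exact ⟨(u, P), ⟨h1, h2, h3, h5⟩, h4⟩
    · rintro ⟨q, ⟨_, _, _, hs⟩, hx⟩
      exact hs hx
  · rintro q ⟨h1, h2, h3, h4⟩
    refine ⟨h1, fun a b => (h2 a b).trans ?_, h3, ?_, ?_⟩
    · unfold offB
      nlinarith [Nat.zero_le (n * n), Nat.zero_le ((n + 1) ^ m * (thr m n * n))]
    · simpa using Finset.card_le_univ (Finset.univ.filter (fun c => q.2 c ≠ 0))
    · obtain ⟨w, hw, e⟩ := h4 (show q.1 ∈ Lin q.1 q.2 from ⟨0, by simp⟩)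
      have hu := hA w hw
      unfold IsUnaryWord at hu
      push Not at hu
      obtain ⟨a, ha, b, hb, hab⟩ := hu
      refine ⟨a, b, hab, ?_, ?_⟩
      · rw [← e]; exact (List.count_pos_iff.2 ha).ne'
      · rw [← e]; exact (List.count_pos_iff.2 hb).ne'

end ParikhDFA

/-- For every `m ≥ 1` there is a polynomial `p` such that every `n`-state
NFA (with `n ≥ 1`) over an alphabet of `m` letters accepting no unary word admits a Parikh
equivalent DFA with at most `p(n)` states. -/
theorem nfa_to_parikh_equivalent_dfa_nonunary (m : ℕ) (hm : 1 ≤ m) :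
    ∃ p : Polynomial ℕ,
      ∀ n : ℕ, 1 ≤ n →
      ∀ (σ : Type) [Fintype σ], Fintype.card σ = n →
      ∀ A : NFA (Fin m) σ, (∀ w ∈ A.accepts, ¬ IsUnaryWord w) →
      ∃ (σ' : Type) (_ : Fintype σ') (B : DFA (Fin m) σ'),
        Fintype.card σ' ≤ p.eval n ∧
        parikhImage B.accepts = parikhImage A.accepts := by
  obtain ⟨p, hp⟩ := ParikhDFA.main m
  exact ⟨p, fun n _ σ _ hc A hA => hp n σ hc A hA⟩
end

section
/- For every m ≥ 1 there exists a constant C > 0 such that for every n ≥ 2 and every nondeterministic finite automaton with n states over an alphabet Σ of m letters, there exists a deterministic finite automaton over Σ with at most e^{C·√(n·ln n)} states that is Parikh equivalent to it. -/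
/-! ### Parikh vectors and walks -/

/-- total weight of a vector -/
def wt {m : ℕ} (v : Fin m → ℕ) : ℕ := ∑ i, v i

lemma wt_add {m : ℕ} (u v : Fin m → ℕ) : wt (u + v) = wt u + wt v := by
  simp [wt, Finset.sum_add_distrib]

lemma wt_zero {m : ℕ} : wt (0 : Fin m → ℕ) = 0 := by simp [wt]

lemma wt_single {m : ℕ} (a : Fin m) (k : ℕ) : wt (Pi.single a k : Fin m → ℕ) = k := by
  simp [wt]

lemma wt_smul {m : ℕ} (k : ℕ) (v : Fin m → ℕ) : wt (k • v) = k * wt v := by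
  simp [wt, Finset.mul_sum]

lemma wt_sum {m : ℕ} {ι : Type*} (s : Finset ι) (f : ι → Fin m → ℕ) :
    wt (∑ i ∈ s, f i) = ∑ i ∈ s, wt (f i) := by
  classical
  induction s using Finset.induction_on with
  | empty => simp [wt_zero]
  | insert a s ha ih => simp [Finset.sum_insert ha, wt_add, ih]

lemma le_wt {m : ℕ} (v : Fin m → ℕ) (i : Fin m) : v i ≤ wt v :=
  Finset.single_le_sum (f := v) (fun _ _ => Nat.zero_le _) (Finset.mem_univ i)

lemma wt_eq_zero {m : ℕ} {v : Fin m → ℕ} (h : wt v = 0) : v = 0 := by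
  funext i
  have := le_wt v i
  simp; omega

lemma parikh_nil {m : ℕ} : parikh ([] : List (Fin m)) = 0 := by
  funext i; simp [parikh]

lemma parikh_cons {m : ℕ} (a : Fin m) (w : List (Fin m)) :
    parikh (a :: w) = Pi.single a 1 + parikh w := by
  funext i
  by_cases h : a = i
  · subst h; simp [parikh, add_comm]
  · have h' : i ≠ a := fun e => h e.symm
    simp [parikh, h, h']

lemma parikh_append {m : ℕ} (u w : List (Fin m)) :
    parikh (u ++ w) = parikh u + parikh w := by
  funext i; simp [parikh]

lemma exists_word {m : ℕ} (v : Fin m → ℕ) : ∃ w : List (Fin m), parikh w = v := by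
  induction h : wt v generalizing v with
  | zero => exact ⟨[], by rw [parikh_nil, wt_eq_zero h]⟩
  | succ k ih =>
    have : ∃ i, 0 < v i := by
      by_contra! hc
      have : v = 0 := by funext i; simpa using hc i
      rw [this, wt_zero] at h; omega
    obtain ⟨i, hi⟩ := this
    have hv : v = Pi.single i 1 + (v - Pi.single i 1) := by
      funext j
      by_cases hj : j = i
      · subst hj; simp; omega
      · simp [hj]
    have h2 : wt (v - Pi.single i 1) = k := by
      have := congrArg wt hv
      rw [wt_add, wt_single] at this; omega
    obtain ⟨w, hw⟩ := ih _ h2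
    exact ⟨i :: w, by rw [parikh_cons, hw, ← hv]⟩

/-- Walks in an NFA, with Parikh vector and visited set of states. -/
inductive Wk {m : ℕ} {σ : Type} [DecidableEq σ] (A : NFA (Fin m) σ) :
    σ → σ → (Fin m → ℕ) → Finset σ → Prop
  | nil (p : σ) : Wk A p p 0 {p}
  | cons {p q r : σ} {a : Fin m} {v : Fin m → ℕ} {S : Finset σ} :
      q ∈ A.step p a → Wk A q r v S → Wk A p r (Pi.single a 1 + v) (insert p S)

section
variable {m : ℕ} {σ : Type} [DecidableEq σ] {A : NFA (Fin m) σ}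

lemma Wk.append {p q r : σ} {v u : Fin m → ℕ} {S T : Finset σ} (h : Wk A p q v S)
    (h2 : Wk A q r u T) : Wk A p r (v + u) (S ∪ T) := by
  induction h with
  | nil p =>
    have : ({p} : Finset σ) ∪ T = T := by
      have : p ∈ T := by cases h2 <;> simp
      simpa using this
    rw [this, zero_add]; exact h2
  | cons hs _ ih =>
    rw [add_assoc, Finset.insert_union]
    exact Wk.cons hs (ih h2)

lemma Wk.start_mem {p q : σ} {v : Fin m → ℕ} {S : Finset σ} (h : Wk A p q v S) : p ∈ S := by
  cases h <;> simp

lemma Wk.end_mem {p q : σ} {v : Fin m → ℕ} {S : Finset σ} (h : Wk A p q v S) : q ∈ S := by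
  induction h with
  | nil => simp
  | cons _ _ ih => exact Finset.mem_insert_of_mem ih

lemma Wk.split {p r : σ} {v : Fin m → ℕ} {S : Finset σ} (h : Wk A p r v S) {q : σ} (hq : q ∈ S) :
    ∃ v1 v2 S1 S2, Wk A p q v1 S1 ∧ Wk A q r v2 S2 ∧ v = v1 + v2 ∧ S = S1 ∪ S2 := by
  induction h with
  | nil p =>
    have : q = p := by simpa using hq
    subst this
    exact ⟨0, 0, {q}, {q}, Wk.nil q, Wk.nil q, by simp, by simp⟩
  | @cons p q' r a v S hs h ih =>
    by_cases hqp : q = p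
    · subst hqp
      refine ⟨0, _, {q}, _, Wk.nil q, Wk.cons hs h, by simp, by simp⟩
    · obtain ⟨v1, v2, S1, S2, h1, h2, rfl, rfl⟩ := ih (by simpa [hqp] using hq)
      exact ⟨_, v2, _, S2, Wk.cons hs h1, h2, by rw [add_assoc], by rw [Finset.insert_union]⟩

lemma Wk.insert_cycle {p r q : σ} {v z : Fin m → ℕ} {S Z : Finset σ} (h : Wk A p r v S)
    (hq : q ∈ S) (hz : Wk A q q z Z) : Wk A p r (v + z) (S ∪ Z) := by
  obtain ⟨v1, v2, S1, S2, h1, h2, rfl, rfl⟩ := h.split hq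
  have := (h1.append hz).append h2
  convert this using 1
  · abel
  · ext; simp; tauto

lemma Wk.extract [Fintype σ] {p r : σ} {v : Fin m → ℕ} {S : Finset σ} (h : Wk A p r v S) :
    S.card = wt v + 1 ∨ ∃ q v1 z v3 S1 Z S3, Wk A p q v1 S1 ∧ Wk A q q z Z ∧ Wk A q r v3 S3 ∧
      1 ≤ wt z ∧ wt z ≤ Fintype.card σ ∧ v = v1 + z + v3 ∧ S = S1 ∪ Z ∪ S3 := by
  induction h with
  | nil => left; simp [wt_zero]
  | @cons p q r a v S hs h ih =>
    rcases ih with ih | ⟨q', v1, z, v3, S1, Z, S3, h1, hz, h3, hz1, hz2, rfl, rfl⟩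
    · by_cases hp : p ∈ S
      · right
        obtain ⟨v1, v2, S1, S2, h1, h2, rfl, rfl⟩ := h.split hp
        refine ⟨p, 0, Pi.single a 1 + v1, v2, {p}, insert p S1, S2, Wk.nil p, Wk.cons hs h1, h2,
          ?_, ?_, ?_, ?_⟩
        · rw [wt_add, wt_single]; omega
        · have := Finset.card_le_univ (S1 ∪ S2)
          rw [wt_add] at *
          rw [wt_single]; omega
        · rw [zero_add, add_assoc]
        · ext; simp
      · left
        rw [Finset.card_insert_of_notMem hp, wt_add, wt_single, ih]; omega
    · right
      refine ⟨q', _, z, v3, _, Z, S3, Wk.cons hs h1, hz, h3, hz1, hz2, ?_, ?_⟩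
      · simp only [add_assoc]
      · simp only [Finset.insert_union]

lemma Wk.decomp [Fintype σ] {p r : σ} {v : Fin m → ℕ} {S : Finset σ} (h : Wk A p r v S) :
    ∃ (c : Fin m → ℕ) (M : Multiset (Fin m → ℕ)), v = c + M.sum ∧ Wk A p r c S ∧
      wt c ≤ Fintype.card σ * S.card ∧
      ∀ g ∈ M, 1 ≤ wt g ∧ wt g ≤ Fintype.card σ ∧ ∃ q ∈ S, ∃ Z ⊆ S, Wk A q q g Z := by
  induction hk : wt v using Nat.strong_induction_on generalizing v S with
  | _ k ih =>
    rcases h.extract with hS | ⟨q, v1, z, v3, S1, Z, S3, h1, hz, h3, hz1, hz2, rfl, rfl⟩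
    · refine ⟨v, 0, by simp, h, ?_, by simp⟩
      have := Finset.card_le_univ S
      nlinarith
    · have hlt : wt (v1 + v3) < k := by simp only [wt_add] at *; omega
      obtain ⟨c, M, hv, hc, hcw, hM⟩ := ih _ hlt (h1.append h3) rfl
      have hq : q ∈ S1 ∪ S3 := Finset.mem_union_left _ h1.end_mem
      by_cases hZ : Z ⊆ S1 ∪ S3
      · have hS : S1 ∪ Z ∪ S3 = S1 ∪ S3 := by
          ext x
          have := @hZ x
          simp only [Finset.mem_union] at *
          tauto
        rw [hS]
        refine ⟨c, z ::ₘ M, ?_, hc, hcw, ?_⟩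
        · rw [Multiset.sum_cons, add_right_comm v1 z v3, hv]; abel
        · intro g hg
          rcases Multiset.mem_cons.1 hg with rfl | hg
          · exact ⟨hz1, hz2, q, hq, Z, hZ, hz⟩
          · exact hM g hg
      · have hS : S1 ∪ Z ∪ S3 = S1 ∪ S3 ∪ Z := by
          ext x
          simp only [Finset.mem_union]
          tauto
        rw [hS]
        refine ⟨c + z, M, ?_, hc.insert_cycle hq hz, ?_, ?_⟩
        · rw [add_right_comm v1 z v3, hv]; abel
        · have : (S1 ∪ S3).card < (S1 ∪ S3 ∪ Z).card := by
            apply Finset.card_lt_card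
            refine ⟨Finset.subset_union_left, fun hh => hZ (Finset.subset_union_right.trans hh)⟩
          rw [wt_add]
          nlinarith
        · intro g hg
          obtain ⟨a1, a2, q', hq', Z', hZ', hw⟩ := hM g hg
          exact ⟨a1, a2, q', Finset.mem_union_left _ hq', Z', hZ'.trans Finset.subset_union_left, hw⟩

lemma Wk.pump {p r : σ} {c : Fin m → ℕ} {S : Finset σ} (h : Wk A p r c S)
    (M : Multiset (Fin m → ℕ)) (hM : ∀ g ∈ M, ∃ q ∈ S, ∃ Z ⊆ S, Wk A q q g Z) :
    Wk A p r (c + M.sum) S := by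
  induction M using Multiset.induction_on with
  | empty => simpa using h
  | cons g M ih =>
    obtain ⟨q, hq, Z, hZ, hg⟩ := hM g (Multiset.mem_cons_self _ _)
    have := (ih fun g hg => hM g (Multiset.mem_cons_of_mem hg)).insert_cycle hq hg
    rw [Finset.union_eq_left.2 hZ] at this
    rw [Multiset.sum_cons]
    convert this using 1
    abel

lemma Wk.word {p q : σ} {v : Fin m → ℕ} {S : Finset σ} (h : Wk A p q v S) :
    ∃ w, parikh w = v ∧ q ∈ A.evalFrom {p} w := by
  induction h with
  | nil p => exact ⟨[], parikh_nil, by simp⟩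
  | @cons p q r a v S hs h ih =>
    obtain ⟨w, rfl, hw⟩ := ih
    refine ⟨a :: w, parikh_cons a w, ?_⟩
    rw [NFA.evalFrom_cons, NFA.stepSet_singleton, NFA.mem_evalFrom_iff_exists]
    exact ⟨q, hs, hw⟩

lemma Wk.of_word (w : List (Fin m)) {p q : σ} (h : q ∈ A.evalFrom {p} w) :
    ∃ S, Wk A p q (parikh w) S := by
  induction w generalizing p with
  | nil =>
    have : q = p := by simpa using h
    subst this
    exact ⟨{q}, by rw [parikh_nil]; exact Wk.nil q⟩
  | cons a w ih =>
    rw [NFA.evalFrom_cons, NFA.stepSet_singleton, NFA.mem_evalFrom_iff_exists] at h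
    obtain ⟨t, ht, hw⟩ := h
    obtain ⟨S, hS⟩ := ih hw
    exact ⟨_, by rw [parikh_cons]; exact Wk.cons ht hS⟩

lemma mem_image_iff (v : Fin m → ℕ) : v ∈ parikhImage A.accepts ↔
    ∃ s ∈ A.start, ∃ f ∈ A.accept, ∃ S, Wk A s f v S := by
  constructor
  · rintro ⟨w, hw, rfl⟩
    obtain ⟨f, hf, hw⟩ := NFA.mem_accepts.1 hw
    obtain ⟨s, hs, hw⟩ := NFA.mem_evalFrom_iff_exists.1 hw
    exact ⟨s, hs, f, hf, Wk.of_word w hw⟩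
  · rintro ⟨s, hs, f, hf, S, h⟩
    obtain ⟨w, hw, hq⟩ := h.word
    exact ⟨w, NFA.mem_accepts.2 ⟨f, hf, NFA.mem_evalFrom_iff_exists.2 ⟨s, hs, hq⟩⟩, hw⟩

lemma image_decomp [Fintype σ] {v : Fin m → ℕ} (hv : v ∈ parikhImage A.accepts) :
    ∃ (c : Fin m → ℕ) (G : Finset (Fin m → ℕ)) (k : (Fin m → ℕ) → ℕ),
      v = c + ∑ g ∈ G, k g • g ∧ wt c ≤ Fintype.card σ * Fintype.card σ ∧
      (∀ g ∈ G, 1 ≤ wt g ∧ wt g ≤ Fintype.card σ) ∧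
      ∀ k' : (Fin m → ℕ) → ℕ, c + ∑ g ∈ G, k' g • g ∈ parikhImage A.accepts := by
  obtain ⟨s, hs, f, hf, S, h⟩ := (mem_image_iff v).1 hv
  obtain ⟨c, M, hvM, hc, hcw, hM⟩ := h.decomp
  refine ⟨c, M.toFinset, fun g => M.count g, ?_, ?_, ?_, ?_⟩
  · rw [← Finset.sum_multiset_count]; exact hvM
  · exact hcw.trans (Nat.mul_le_mul_left _ (Finset.card_le_univ S))
  · intro g hg
    obtain ⟨h1, h2, _⟩ := hM g (Multiset.mem_toFinset.1 hg)
    exact ⟨h1, h2⟩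
  · intro k'
    refine (mem_image_iff _).2 ⟨s, hs, f, hf, S, ?_⟩
    have := hc.pump (∑ g ∈ M.toFinset, k' g • ({g} : Multiset (Fin m → ℕ))) ?_
    · convert this using 2
      rw [Multiset.sum_sum]
      simp only [Multiset.sum_nsmul, Multiset.sum_singleton]
    · intro g hg
      rw [Multiset.mem_sum] at hg
      obtain ⟨g', hg', hg⟩ := hg
      have : g = g' := by simpa using Multiset.mem_of_mem_nsmul hg
      subst this
      exact (hM g (Multiset.mem_toFinset.1 hg')).2.2
end

/-! ### Exchange argument -/

/-- Two distinct small combinations with the same sum, when there are too many generators. -/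
lemma pigeon {m : ℕ} (B : Finset (Fin m → ℕ)) (U : Finset (Fin m)) (n M D : ℕ)
    (hn : 1 ≤ n) (hD : B.card ≤ D)
    (hB : ∀ g ∈ B, wt g ≤ n) (hU : ∀ g ∈ B, ∀ i, g i ≠ 0 → i ∈ U) (hUB : U.card < B.card)
    (hM : (D * n) ^ m ≤ M) :
    ∃ b b' : (Fin m → ℕ) → ℕ, (∀ g, b g ≤ M ∧ b' g ≤ M) ∧ (∃ g ∈ B, b g ≠ b' g) ∧
      ∑ g ∈ B, b g • g = ∑ g ∈ B, b' g • g := by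
  classical
  set X : Finset ((g : Fin m → ℕ) → g ∈ B → ℕ) := B.pi fun _ => Finset.range (M + 1) with hX
  set Y : Finset ((i : Fin m) → i ∈ U → ℕ) := U.pi fun _ => Finset.range (D * M * n + 1) with hY
  have hDn : 1 ≤ D * n := Nat.mul_pos (by omega) (by omega)
  have hcard : Y.card < X.card := by
    rw [hX, hY, Finset.card_pi, Finset.card_pi]
    simp only [Finset.card_range, Finset.prod_const]
    calc (D * M * n + 1) ^ U.card ≤ ((M + 1) * (D * n)) ^ U.card := by
          apply Nat.pow_le_pow_left; nlinarith
      _ = (M + 1) ^ U.card * (D * n) ^ U.card := by rw [mul_pow]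
      _ ≤ (M + 1) ^ U.card * (D * n) ^ m := by
          apply Nat.mul_le_mul_left
          apply Nat.pow_le_pow_right hDn
          simpa using Finset.card_le_univ U
      _ < (M + 1) ^ U.card * (M + 1) := by
          apply Nat.mul_lt_mul_of_pos_left (by omega) (by positivity)
      _ = (M + 1) ^ (U.card + 1) := by rw [pow_succ]
      _ ≤ (M + 1) ^ B.card := Nat.pow_le_pow_right (by omega) hUB
  let ext : ((g : Fin m → ℕ) → g ∈ B → ℕ) → (Fin m → ℕ) → ℕ :=
    fun x g => if h : g ∈ B then x g h else 0
  have hext : ∀ x ∈ X, ∀ g, ext x g ≤ M := by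
    intro x hx g
    by_cases h : g ∈ B
    · have := Finset.mem_pi.1 hx g h
      simp only [ext, h, dif_pos]
      simp at this; omega
    · simp [ext, h]
  obtain ⟨x, hx, y, hy, hne, heq⟩ := Finset.exists_ne_map_eq_of_card_lt_of_maps_to hcard
    (f := fun x i _ => (∑ g ∈ B, ext x g • g) i) (by
      intro x hx
      refine Finset.mem_coe.2 (Finset.mem_pi.2 fun i hi => ?_)
      rw [Finset.mem_range, Nat.lt_succ_iff]
      simp only [Finset.sum_apply]
      calc ∑ g ∈ B, (ext x g • g) i ≤ ∑ g ∈ B, M * n := by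
            apply Finset.sum_le_sum
            intro g hg
            simp only [Pi.smul_apply, smul_eq_mul]
            exact Nat.mul_le_mul (hext x hx g) ((le_wt g i).trans (hB g hg))
        _ = B.card * (M * n) := by simp
        _ ≤ D * M * n := by rw [mul_assoc]; exact Nat.mul_le_mul_right _ hD)
  refine ⟨ext x, ext y, fun g => ⟨hext x hx g, hext y hy g⟩, ?_, ?_⟩
  · by_contra! hc
    apply hne
    funext g hg
    simpa [ext, hg] using hc g hg
  · funext i
    by_cases hi : i ∈ U
    · exact congrFun (congrFun heq i) hi
    · rw [Finset.sum_apply, Finset.sum_apply]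
      apply Finset.sum_congr rfl
      intro g hg
      have : g i = 0 := by
        by_contra h
        exact hi (hU g hg i h)
      simp [this]

lemma sq_arith (k b b' M : ℕ) (hk : M ≤ k) (hb : b ≤ M) (hb' : b' ≤ M) :
    2 * k ^ 2 + (if b = b' then 0 else 1) ≤ (k + b - b') ^ 2 + (k + b' - b) ^ 2 := by
  obtain ⟨x, hx⟩ : ∃ x, k + b - b' = x := ⟨_, rfl⟩
  obtain ⟨y, hy⟩ : ∃ y, k + b' - b = y := ⟨_, rfl⟩
  rw [hx, hy]
  have h1 : x + b' = k + b := by omega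
  have h2 : y + b = k + b' := by omega
  have h3 : x + y = 2 * k := by omega
  split_ifs with h
  · subst h
    have : x = k := by omega
    have : y = k := by omega
    subst x; subst y; nlinarith
  · have : x ≠ y := by omega
    zify at *
    have hk' : (k : ℤ) * 2 = x + y := by linarith
    have : 1 ≤ ((x : ℤ) - y) ^ 2 := by
      have : (0:ℤ) < ((x : ℤ) - y) ^ 2 := by
        have : (x : ℤ) - y ≠ 0 := sub_ne_zero.2 this
        positivity
      linarith
    have h4 : 4 * (2 * (k : ℤ) ^ 2 + 1) ≤ 4 * ((x : ℤ) ^ 2 + y ^ 2) + 3 := by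
      have : 4 * (k : ℤ) ^ 2 = (x + y) ^ 2 := by rw [← hk']; ring
      nlinarith
    omega

lemma exchange {m : ℕ} (G : Finset (Fin m → ℕ)) (n M D : ℕ) (hn : 1 ≤ n) (hD : G.card ≤ D)
    (hG : ∀ g ∈ G, 1 ≤ wt g ∧ wt g ≤ n) (hM : (D * n) ^ m ≤ M) (k0 : (Fin m → ℕ) → ℕ) :
    ∃ k : (Fin m → ℕ) → ℕ, ∑ g ∈ G, k g • g = ∑ g ∈ G, k0 g • g ∧
      ∃ f : {g // g ∈ G ∧ M ≤ k g} → Fin m, Function.Injective f ∧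
        ∀ x : {g // g ∈ G ∧ M ≤ k g}, x.1 (f x) ≠ 0 := by
  classical
  set v := ∑ g ∈ G, k0 g • g with hv
  let Q : ℕ → Prop := fun t => ∃ k : (Fin m → ℕ) → ℕ, ∑ g ∈ G, k g • g = v ∧ ∑ g ∈ G, k g ^ 2 = t
  have hbd : ∀ t, Q t → t ≤ G.card * (wt v) ^ 2 := by
    rintro t ⟨k, hk, rfl⟩
    rw [← smul_eq_mul, ← Finset.sum_const]
    apply Finset.sum_le_sum
    intro g hg
    apply Nat.pow_le_pow_left
    rw [← hk, wt_sum]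
    calc k g ≤ wt (k g • g) := by rw [wt_smul]; nlinarith [(hG g hg).1]
      _ ≤ _ := Finset.single_le_sum (f := fun g => wt (k g • g)) (fun _ _ => Nat.zero_le _) hg
  have hQ0 : Q (∑ g ∈ G, k0 g ^ 2) := ⟨k0, rfl, rfl⟩
  obtain ⟨k, hk, hkt⟩ := Nat.findGreatest_spec (hbd _ hQ0) hQ0
  have hmax : ∀ k' : (Fin m → ℕ) → ℕ, ∑ g ∈ G, k' g • g = v →
      ∑ g ∈ G, k' g ^ 2 ≤ ∑ g ∈ G, k g ^ 2 := by
    intro k' hk'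
    rw [hkt]
    exact Nat.le_findGreatest (hbd _ ⟨k', hk', rfl⟩) ⟨k', hk', rfl⟩
  refine ⟨k, hk, ?_⟩
  obtain ⟨f, hf1, hf2⟩ := (Finset.all_card_le_biUnion_card_iff_exists_injective
    (fun x : {g // g ∈ G ∧ M ≤ k g} => Finset.univ.filter fun i => x.1 i ≠ 0)).1 (by
    intro s
    by_contra! hlt
    set B : Finset (Fin m → ℕ) := s.map ⟨Subtype.val, Subtype.val_injective⟩ with hBdef
    have hBG : ∀ g ∈ B, g ∈ G ∧ M ≤ k g := by
      intro g hg
      obtain ⟨x, _, rfl⟩ := Finset.mem_map.1 hg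
      exact x.2
    have hsub : B ⊆ G := fun g hg => (hBG g hg).1
    obtain ⟨b, b', hbb, ⟨g0, hg0, hne⟩, hsum⟩ := pigeon B
      (s.biUnion fun x : {g // g ∈ G ∧ M ≤ k g} => Finset.univ.filter fun i => x.1 i ≠ 0) n M D hn
      ((Finset.card_le_card hsub).trans hD) (fun g hg => (hG g (hsub hg)).2)
      (by
        intro g hg i hi
        obtain ⟨x, hx, rfl⟩ := Finset.mem_map.1 hg
        exact Finset.mem_biUnion.2 ⟨x, hx, by simpa using hi⟩)
      (by rw [hBdef, Finset.card_map]; exact hlt) hM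
    have key : ∀ c c' : (Fin m → ℕ) → ℕ, (∀ g, c g ≤ M ∧ c' g ≤ M) →
        ∑ g ∈ B, c g • g = ∑ g ∈ B, c' g • g →
        ∑ g ∈ G, (if g ∈ B then k g + c g - c' g else k g) ^ 2 ≤ ∑ g ∈ G, k g ^ 2 := by
      intro c c' hcc hs
      apply hmax (fun g => if g ∈ B then k g + c g - c' g else k g)
      have e : ∑ g ∈ G, (if g ∈ B then k g + c g - c' g else k g) • g + ∑ g ∈ B, c' g • g =
          ∑ g ∈ G, k g • g + ∑ g ∈ B, c g • g := by
        rw [Finset.sum_subset_zero_on_sdiff hsub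
            (g := fun g => if g ∈ B then c' g • g else 0) (f := fun g => c' g • g)
            (by intro x hx; simp [(Finset.mem_sdiff.1 hx).2]) (by intro x hx; simp [hx]),
          Finset.sum_subset_zero_on_sdiff hsub
            (g := fun g => if g ∈ B then c g • g else 0) (f := fun g => c g • g)
            (by intro x hx; simp [(Finset.mem_sdiff.1 hx).2]) (by intro x hx; simp [hx]),
          ← Finset.sum_add_distrib, ← Finset.sum_add_distrib]
        apply Finset.sum_congr rfl
        intro g hg
        by_cases h : g ∈ B
        · simp only [h, if_true]
          rw [← add_smul, ← add_smul]
          congr 1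
          have := (hBG g h).2
          have := hcc g
          omega
        · simp [h]
      rw [hs, hk] at e
      exact add_right_cancel e
    have h1 := key b b' hbb hsum
    have h2 := key b' b (fun g => (hbb g).symm) hsum.symm
    have h3 : ∑ g ∈ G, (2 * k g ^ 2 + if g = g0 then 1 else 0) ≤
        ∑ g ∈ G, ((if g ∈ B then k g + b g - b' g else k g) ^ 2 +
          (if g ∈ B then k g + b' g - b g else k g) ^ 2) := by
      apply Finset.sum_le_sum
      intro g hg
      by_cases h : g ∈ B
      · simp only [h, if_true]
        refine le_trans ?_ (sq_arith (k g) (b g) (b' g) M (hBG g h).2 (hbb g).1 (hbb g).2)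
        by_cases hgg : g = g0
        · subst hgg; simp [hne]
        · simp [hgg]
      · have : g ≠ g0 := fun e => h (e ▸ hg0)
        simp [h, this]; omega
    rw [Finset.sum_add_distrib, Finset.sum_add_distrib, ← Finset.mul_sum,
      Finset.sum_ite_eq' G g0, if_pos (hsub hg0)] at h3
    omega)
  exact ⟨f, hf1, fun x => by simpa using hf2 x⟩

/-- bound on the offsets -/
def Nbd (m n : ℕ) : ℕ := n * n + (n + 1) ^ m * (((n + 1) ^ m * n) ^ m * n)

lemma semilinear {m : ℕ} {σ : Type} [Fintype σ] (A : NFA (Fin m) σ) (n : ℕ) (hn : 1 ≤ n)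
    (hcard : Fintype.card σ = n) {v : Fin m → ℕ} (hv : v ∈ parikhImage A.accepts) :
    ∃ (c : Fin m → ℕ) (G : Fin m → Fin m → ℕ) (κ : Fin m → ℕ),
      v = c + ∑ d, κ d • G d ∧ wt c ≤ Nbd m n ∧
      (∀ d, wt (G d) ≤ n ∧ (G d = 0 ∨ G d d ≠ 0)) ∧
      ∀ κ' : Fin m → ℕ, c + ∑ d, κ' d • G d ∈ parikhImage A.accepts := by
  classical
  obtain ⟨c, G, k0, hvk, hc, hG, hpump⟩ := image_decomp hv
  rw [hcard] at hc hG
  set D := (n + 1) ^ m with hDdef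
  have hD : G.card ≤ D := by
    have : G ⊆ Fintype.piFinset (fun _ : Fin m => Finset.range (n + 1)) := by
      intro g hg
      rw [Fintype.mem_piFinset]
      intro i
      have := le_wt g i
      have := (hG g hg).2
      simp; omega
    have := Finset.card_le_card this
    simpa using this
  set M := (D * n) ^ m with hMdef
  obtain ⟨k, hk, f, hf, hfx⟩ := exchange G n M D hn hD hG le_rfl k0
  haveI : Fintype {g // g ∈ G ∧ M ≤ k g} :=
    Fintype.subtype (G.filter fun g => M ≤ k g) (by intro x; simp)
  set GG : Fin m → Fin m → ℕ := Function.extend f Subtype.val 0 with hGG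
  set c' := c + ∑ g ∈ G.filter (fun g => ¬ M ≤ k g), k g • g with hc'
  have hGf : ∀ x, GG (f x) = x.1 := fun x => hf.extend_apply _ _ x
  have hG0 : ∀ d, d ∉ Set.range f → GG d = 0 := by
    intro d hd
    exact Function.extend_apply' _ _ _ (by simpa using hd)
  have key : ∀ κ' : Fin m → ℕ, c' + ∑ d, κ' d • GG d = c + ∑ g ∈ G,
      (if h : g ∈ G ∧ M ≤ k g then κ' (f ⟨g, h⟩) else k g) • g := by
    intro κ'
    rw [← Fintype.sum_of_injective f hf (fun x => κ' (f x) • x.1) (fun d => κ' d • GG d)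
      (by intro d hd; simp [hG0 d hd]) (by intro x; simp [hGf])]
    rw [hc', add_assoc]
    congr 1
    rw [← Finset.sum_filter_add_sum_filter_not G (fun g => M ≤ k g), add_comm]
    congr 1
    · rw [Finset.sum_subtype (G.filter (fun g => M ≤ k g)) (p := fun g => g ∈ G ∧ M ≤ k g)
        (by intro x; simp)]
      apply Finset.sum_congr rfl
      intro x _
      rw [dif_pos x.2]
    · apply Finset.sum_congr rfl
      intro g hg
      rw [dif_neg]
      have := (Finset.mem_filter.1 hg).2
      tauto
  refine ⟨c', GG, Function.extend f (fun x => k x.1) 0, ?_, ?_, ?_, ?_⟩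
  · rw [key, hvk, ← hk]
    congr 1
    apply Finset.sum_congr rfl
    intro g hg
    split_ifs with h
    · rw [hf.extend_apply]
    · rfl
  · rw [hc', wt_add, wt_sum, Nbd]
    refine Nat.add_le_add hc ?_
    calc ∑ g ∈ G.filter (fun g => ¬ M ≤ k g), wt (k g • g)
        ≤ ∑ g ∈ G.filter (fun g => ¬ M ≤ k g), M * n := by
          apply Finset.sum_le_sum
          intro g hg
          obtain ⟨h1, h2⟩ := Finset.mem_filter.1 hg
          rw [wt_smul]
          exact Nat.mul_le_mul (by omega) (hG g h1).2
      _ = (G.filter (fun g => ¬ M ≤ k g)).card * (M * n) := by simp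
      _ ≤ D * (M * n) := Nat.mul_le_mul_right _ ((Finset.card_filter_le _ _).trans hD)
  · intro d
    by_cases hd : d ∈ Set.range f
    · obtain ⟨x, rfl⟩ := hd
      rw [hGf]
      exact ⟨(hG _ x.2.1).2, Or.inr (hfx x)⟩
    · rw [hG0 d hd, wt_zero]
      exact ⟨Nat.zero_le _, Or.inl rfl⟩
  · intro κ'
    rw [key]
    exact hpump _

/-! ### Unary walks -/

/-- walks of a given length for a relation -/
def W {σ : Type} (E : σ → σ → Prop) : ℕ → σ → σ → Prop
  | 0, p, q => p = q
  | k + 1, p, q => ∃ r, E p r ∧ W E k r q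

section
variable {σ : Type} {E : σ → σ → Prop}

lemma W_add (k l : ℕ) (p q : σ) : W E (k + l) p q ↔ ∃ r, W E k p r ∧ W E l r q := by
  induction k generalizing p with
  | zero => simp [W]
  | succ k ih =>
    rw [Nat.succ_add]
    simp only [W, ih]
    constructor
    · rintro ⟨r, h1, s, h2, h3⟩; exact ⟨s, ⟨r, h1, h2⟩, h3⟩
    · rintro ⟨s, ⟨r, h1, h2⟩, h3⟩; exact ⟨r, h1, s, h2, h3⟩

lemma W.trans {k l : ℕ} {p q r : σ} (h : W E k p q) (h' : W E l q r) : W E (k + l) p r :=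
  (W_add _ _ _ _).2 ⟨q, h, h'⟩

lemma W.rep {k : ℕ} {p : σ} (h : W E k p p) (t : ℕ) : W E (t * k) p p := by
  induction t with
  | zero => simp [W]
  | succ t ih => rw [Nat.succ_mul]; exact ih.trans h

/-- shortening of walks modulo `d` -/
lemma W.shorten [Fintype σ] {d : ℕ} (hd : 1 ≤ d) {k : ℕ} {p q : σ} (h : W E k p q) :
    ∃ k', k' < Fintype.card σ * d ∧ k' ≤ k ∧ k' ≡ k [MOD d] ∧ W E k' p q := by
  induction k using Nat.strong_induction_on with
  | _ k ih =>
    by_cases hk : k < Fintype.card σ * d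
    · exact ⟨k, hk, le_rfl, Nat.ModEq.refl _, h⟩
    · push Not at hk
      have hst : ∀ i : Fin (Fintype.card σ + 1), ∃ r, W E (i * d) p r ∧ W E (k - i * d) r q := by
        intro i
        have : (i : ℕ) * d ≤ k := le_trans (Nat.mul_le_mul_right _ (by omega)) hk
        rw [← W_add, Nat.add_sub_cancel' this]; exact h
      choose r hr1 hr2 using hst
      obtain ⟨i, j, hij, hrij⟩ := Fintype.exists_ne_map_eq_of_card_lt r (by simp)
      wlog hlt : i < j generalizing i j with H
      · exact H j i hij.symm hrij.symm (lt_of_le_of_ne (not_lt.1 hlt) hij.symm)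
      have hlt' : (i : ℕ) < j := hlt
      have hjk : (j : ℕ) * d ≤ k := le_trans (Nat.mul_le_mul_right _ (by omega)) hk
      have hid : (i : ℕ) * d + d ≤ j * d := by
        rw [← Nat.succ_mul]; exact Nat.mul_le_mul_right _ hlt'
      have hw : W E (i * d + (k - j * d)) p q := (hr1 i).trans (hrij ▸ hr2 j)
      obtain ⟨k', h1, h2, h3, h4⟩ := ih _ (by omega) hw
      refine ⟨k', h1, by omega, h3.trans ?_, h4⟩
      have hdv : d ∣ (j : ℕ) * d - i * d := by
        rw [← Nat.sub_mul]; exact Dvd.intro_left _ rfl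
      rw [Nat.modEq_iff_dvd' (by omega)]
      convert hdv using 1
      omega

/-- mutual reachability -/
def Conn (E : σ → σ → Prop) (p q : σ) : Prop := (∃ k, W E k p q) ∧ ∃ k, W E k q p

lemma Conn.symm {p q : σ} (h : Conn E p q) : Conn E q p := ⟨h.2, h.1⟩

lemma Conn.trans {p q r : σ} (h : Conn E p q) (h' : Conn E q r) : Conn E p r := by
  obtain ⟨⟨a, ha⟩, ⟨b, hb⟩⟩ := h
  obtain ⟨⟨c, hc⟩, ⟨d, hd⟩⟩ := h'
  exact ⟨⟨_, ha.trans hc⟩, ⟨_, hd.trans hb⟩⟩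

/-- the length of a shortest cycle in the component of `p` (`0` if there is none) -/
noncomputable def dmin (E : σ → σ → Prop) (p : σ) : ℕ :=
  sInf {d | 1 ≤ d ∧ ∃ q, Conn E p q ∧ W E d q q}

lemma dmin_congr {p q : σ} (h : Conn E p q) : dmin E p = dmin E q := by
  unfold dmin
  congr 1
  ext d
  constructor
  · rintro ⟨h1, r, h2, h3⟩; exact ⟨h1, r, h.symm.trans h2, h3⟩
  · rintro ⟨h1, r, h2, h3⟩; exact ⟨h1, r, h.trans h2, h3⟩

lemma dmin_spec {p : σ} (h : dmin E p ≠ 0) :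
    ∃ q, Conn E p q ∧ W E (dmin E p) q q := by
  have hne := Nat.nonempty_of_pos_sInf (Nat.pos_of_ne_zero h)
  exact (Nat.sInf_mem hne).2

lemma dmin_ne_zero {p : σ} {d : ℕ} (hd : 1 ≤ d) (h : W E d p p) : dmin E p ≠ 0 := by
  have hne : {d | 1 ≤ d ∧ ∃ q, Conn E p q ∧ W E d q q}.Nonempty :=
    ⟨d, hd, p, ⟨⟨0, rfl⟩, ⟨0, rfl⟩⟩, h⟩
  have : 1 ≤ dmin E p := (Nat.sInf_mem hne).1
  omega

lemma dmin_le {p q : σ} {d : ℕ} (hd : 1 ≤ d) (hc : Conn E p q) (h : W E d q q) : dmin E p ≤ d :=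
  Nat.sInf_le ⟨hd, q, hc, h⟩

lemma card_dmin [Fintype σ] [DecidableEq σ] (p : σ) (h : dmin E p ≠ 0) :
    dmin E p ≤ (Finset.univ.filter fun q => dmin E q = dmin E p).card := by
  obtain ⟨q, hpq, hq⟩ := dmin_spec h
  set d := dmin E p with hd
  have hst : ∀ i : Fin d, ∃ r, W E i q r ∧ W E (d - i) r q := by
    intro i
    rw [← W_add, Nat.add_sub_cancel' i.2.le]; exact hq
  choose r hr1 hr2 using hst
  have hconn : ∀ i, Conn E p (r i) := fun i => hpq.trans ⟨⟨_, hr1 i⟩, ⟨_, hr2 i⟩⟩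
  have hinj : Function.Injective r := by
    intro i j hij
    by_contra hne
    wlog hlt : i < j generalizing i j with H
    · exact H hij.symm (Ne.symm hne) (lt_of_le_of_ne (not_lt.1 hlt) (Ne.symm hne))
    have hlt' : (i : ℕ) < j := hlt
    have hj := j.2
    have hw : W E (i + (d - j)) q q := (hr1 i).trans (hij ▸ hr2 j)
    have := dmin_le (by omega) hpq hw
    omega
  have := Finset.card_le_card_of_injOn (s := (Finset.univ : Finset (Fin d))) r
    (t := Finset.univ.filter fun q => dmin E q = d)
    (by intro i _; simp [← dmin_congr (hconn i), hd]) hinj.injOn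
  simpa using this

/-- the set of component cycle lengths -/
noncomputable def Dset [Fintype σ] (E : σ → σ → Prop) : Finset ℕ :=
  (Finset.univ.image (dmin E)).filter fun d => d ≠ 0

lemma sum_Dset [Fintype σ] : ∑ d ∈ Dset E, d ≤ Fintype.card σ := by
  classical
  calc ∑ d ∈ Dset E, d ≤ ∑ d ∈ Dset E, (Finset.univ.filter fun q => dmin E q = d).card := by
        apply Finset.sum_le_sum
        intro d hd
        simp only [Dset, Finset.mem_filter, Finset.mem_image, Finset.mem_univ, true_and] at hd
        obtain ⟨⟨p, rfl⟩, h⟩ := hd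
        exact card_dmin p h
    _ = ((Dset E).biUnion fun d => Finset.univ.filter fun q => dmin E q = d).card := by
        rw [Finset.card_biUnion]
        intro x _ y _ hxy
        rw [Function.onFun, Finset.disjoint_left]
        intro q h1 h2
        simp at h1 h2
        exact hxy (h1.symm.trans h2)
    _ ≤ Fintype.card σ := Finset.card_le_univ _

lemma W.seq {k : ℕ} {p q : σ} (h : W E k p q) :
    ∃ f : ℕ → σ, f 0 = p ∧ f k = q ∧ ∀ i j, i ≤ j → j ≤ k → W E (j - i) (f i) (f j) := by
  induction k generalizing p with
  | zero =>
    have h : p = q := h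
    refine ⟨fun _ => p, rfl, h, ?_⟩
    intro i j hij hj
    have : j - i = 0 := by omega
    rw [this]; rfl
  | succ k ih =>
    obtain ⟨r, hr, h⟩ := h
    obtain ⟨f, hf0, hfk, hf⟩ := ih h
    refine ⟨fun i => Nat.casesOn i p f, rfl, hfk, ?_⟩
    intro i j hij hj
    cases j with
    | zero =>
      have : i = 0 := by omega
      subst this
      rfl
    | succ j =>
      cases i with
      | zero => exact ⟨r, hr, by simpa [hf0] using hf 0 j (by omega) (by omega)⟩
      | succ i =>
        have := hf i j (by omega) (by omega)
        rwa [Nat.add_sub_add_right]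

/-- the structure of long unary walks -/
lemma W.long [Fintype σ] {k : ℕ} {p q : σ} (hk : Fintype.card σ ≤ k) (h : W E k p q) :
    ∃ d ∈ Dset E, ∃ k', k' ≤ 4 * Fintype.card σ ^ 2 ∧ k' ≡ k [MOD d] ∧
      ∀ t, W E (k' + t * d) p q := by
  classical
  obtain ⟨f, hf0, hfk, hf⟩ := h.seq
  obtain ⟨i, j, hij, hrij⟩ := Fintype.exists_ne_map_eq_of_card_lt
    (fun i : Fin (Fintype.card σ + 1) => f i) (by simp)
  wlog hlt : i < j generalizing i j with H
  · exact H j i hij.symm hrij.symm (lt_of_le_of_ne (not_lt.1 hlt) hij.symm)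
  have hlt' : (i : ℕ) < j := hlt
  have hjn := j.2
  set s := f i with hs
  have hcyc : W E (j - i) s s := by
    have := hf i j hlt'.le (by omega)
    rwa [← hrij] at this
  have hpre : W E i p s := by
    have := hf 0 i (by omega) (by omega)
    rwa [hf0] at this
  have hsuf : W E (k - i) s q := by
    have := hf i k (by omega) (by omega)
    rwa [hfk] at this
  have hd0 := dmin_ne_zero (by omega) hcyc
  obtain ⟨q0, ⟨⟨e1, he1⟩, ⟨e2, he2⟩⟩, hq0⟩ := dmin_spec hd0
  have hdn : dmin E s ≤ Fintype.card σ := (card_dmin s hd0).trans (Finset.card_le_univ _)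
  set d := dmin E s with hd
  obtain ⟨e1, h1, -, -, he1⟩ := he1.shorten le_rfl
  obtain ⟨e2, h2, -, -, he2⟩ := he2.shorten le_rfl
  obtain ⟨a, ha, -, hac, hpre⟩ := hpre.shorten (d := d) (by omega)
  obtain ⟨b, hb, -, hbc, hsuf⟩ := hsuf.shorten (d := d) (by omega)
  refine ⟨d, by simp [Dset, hd0]; exact ⟨s, rfl⟩, a + d * (e1 + e2) + b, ?_, ?_, ?_⟩
  · have := Nat.mul_le_mul_left (Fintype.card σ) hdn
    have : d * (e1 + e2) ≤ Fintype.card σ * (2 * Fintype.card σ) :=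
      Nat.mul_le_mul hdn (by omega)
    nlinarith
  · have e : k = i + d * 0 + (k - i) := by omega
    rw [e]
    refine (hac.add ?_).add hbc
    simp [Nat.ModEq]
  · intro t
    have hloop : W E ((d - 1) * (e1 + e2)) s s := (he1.trans he2).rep _
    have := (((hpre.trans he1).trans (hq0.rep t)).trans he2).trans (hloop.trans hsuf)
    convert this using 1
    obtain ⟨d', hd'⟩ : ∃ d', d = d' + 1 := ⟨d - 1, by omega⟩
    rw [hd']
    simp only [Nat.add_sub_cancel]
    ring

/-- ultimate periodicity of unary languages -/
lemma W.periodic [Fintype σ] {L : ℕ} (hL : ∀ d ∈ Dset E, d ∣ L) (P Q : Set σ) {x y : ℕ}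
    (hx : 4 * Fintype.card σ ^ 2 ≤ x) (hy : 4 * Fintype.card σ ^ 2 ≤ y) (hxy : x ≡ y [MOD L])
    (h : ∃ p ∈ P, ∃ q ∈ Q, W E x p q) : ∃ p ∈ P, ∃ q ∈ Q, W E y p q := by
  obtain ⟨p, hp, q, hq, h⟩ := h
  refine ⟨p, hp, q, hq, ?_⟩
  obtain ⟨d, hd, k', hk', hmod, hw⟩ := h.long (by nlinarith)
  have : k' ≡ y [MOD d] := hmod.trans (hxy.of_dvd (hL d hd))
  obtain ⟨t, ht⟩ := (Nat.modEq_iff_dvd' (hk'.trans hy)).1 this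
  have := hw t
  have e : y = k' + t * d := by rw [mul_comm, ← ht]; omega
  rwa [e]
end

lemma unary_mem_iff {m : ℕ} {σ : Type} (A : NFA (Fin m) σ) (a : Fin m) (x : ℕ) :
    (Pi.single a x : Fin m → ℕ) ∈ parikhImage A.accepts ↔
      ∃ p ∈ A.start, ∃ q ∈ A.accept, W (fun p q => q ∈ A.step p a) x p q := by
  classical
  rw [mem_image_iff]
  constructor
  · rintro ⟨s, hs, f, hf, S, h⟩
    refine ⟨s, hs, f, hf, ?_⟩
    generalize hv : (Pi.single a x : Fin m → ℕ) = v at h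
    clear hs hf
    induction h generalizing x with
    | nil p =>
      have : x = 0 := by simpa using congrFun hv a
      subst this; rfl
    | @cons p q r b v S hst _ ih =>
      have hb : b = a := by
        by_contra hne
        have := congrFun hv b
        simp [hne] at this
        omega
      subst hb
      obtain ⟨y, rfl⟩ : ∃ y, x = y + 1 := by
        have := congrFun hv b
        simp at this
        exact ⟨v b, by omega⟩
      refine ⟨q, hst, ih y ?_⟩
      rw [add_comm y 1, Pi.single_add] at hv
      exact add_left_cancel hv
  · rintro ⟨s, hs, f, hf, h⟩
    refine ⟨s, hs, f, hf, ?_⟩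
    clear hs
    induction x generalizing s with
    | zero =>
      have h : s = f := h
      subst h
      exact ⟨{s}, by rw [Pi.single_zero]; exact Wk.nil s⟩
    | succ x ih =>
      obtain ⟨r, hr, h⟩ := h
      obtain ⟨S, hS⟩ := ih r h
      exact ⟨_, by rw [add_comm x 1, Pi.single_add]; exact Wk.cons hr hS⟩

/-! ### Landau-type bound -/

lemma prime_pow_dvd_lcm (D : Finset ℕ) {p e : ℕ} (hp : p.Prime) (he : e ≠ 0)
    (hD : ∀ d ∈ D, d ≠ 0) (h : p ^ e ∣ D.lcm id) :
    ∃ d ∈ D, p ^ e ∣ d := by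
  induction D using Finset.induction_on with
  | empty =>
    simp only [Finset.lcm_empty, Nat.dvd_one] at h
    have := Nat.one_lt_pow he hp.one_lt
    omega
  | insert a s ha ih =>
    rw [Finset.lcm_insert] at h
    have ha0 : a ≠ 0 := hD a (Finset.mem_insert_self _ _)
    have hs0 : s.lcm id ≠ 0 := by
      rw [Ne, Finset.lcm_eq_zero_iff]
      rintro ⟨x, hx, hx0⟩
      exact hD x (Finset.mem_insert_of_mem hx) hx0
    have h' : p ^ e ∣ Nat.lcm a (s.lcm id) := h
    rw [hp.pow_dvd_iff_le_factorization (Nat.lcm_ne_zero ha0 hs0),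
      Nat.factorization_lcm ha0 hs0, Finsupp.sup_apply, le_sup_iff] at h'
    rcases h' with h' | h'
    · exact ⟨a, Finset.mem_insert_self _ _, (hp.pow_dvd_iff_le_factorization ha0).2 h'⟩
    · obtain ⟨d, hd, hdd⟩ := ih (fun d hd => hD d (Finset.mem_insert_of_mem hd))
        ((hp.pow_dvd_iff_le_factorization hs0).2 h')
      exact ⟨d, Finset.mem_insert_of_mem hd, hdd⟩

lemma lcm_bound (D : Finset ℕ) (n T : ℕ) (hn : 1 ≤ n) (hT : n ≤ T * T)
    (hD : ∀ d ∈ D, d ≠ 0) (hsum : ∑ d ∈ D, d ≤ n) :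
    D.lcm id ≤ n ^ (Nat.primeCounting T + n / T) := by
  classical
  have hT1 : 1 ≤ T := by
    by_contra h
    have : T = 0 := by omega
    subst this; omega
  set L := D.lcm id with hL
  have hL0 : L ≠ 0 := by
    rw [hL, Ne, Finset.lcm_eq_zero_iff]
    rintro ⟨x, hx, hx0⟩
    exact hD x hx hx0
  have hdn : ∀ d ∈ D, d ≤ n := fun d hd =>
    (Finset.single_le_sum (f := fun d => d) (fun _ _ => Nat.zero_le _) hd).trans hsum
  have h1 : L ≤ n ^ L.primeFactors.card := by
    conv_lhs => rw [← Nat.prod_factorization_pow_eq_self hL0]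
    rw [Finsupp.prod, Nat.support_factorization, ← Finset.prod_const]
    apply Finset.prod_le_prod'
    intro p hp
    have hpp := Nat.prime_of_mem_primeFactors hp
    have he : L.factorization p ≠ 0 :=
      (hpp.factorization_pos_of_dvd hL0 (Nat.dvd_of_mem_primeFactors hp)).ne'
    obtain ⟨d, hd, hdd⟩ := prime_pow_dvd_lcm D hpp he hD (Nat.ordProj_dvd L p)
    exact (Nat.le_of_dvd (Nat.pos_of_ne_zero (hD d hd)) hdd).trans (hdn d hd)
  refine h1.trans (Nat.pow_le_pow_right hn ?_)
  rw [← Finset.card_filter_add_card_filter_not (s := L.primeFactors) (fun p => p ≤ T)]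
  apply Nat.add_le_add
  · rw [Nat.primeCounting, Nat.primeCounting', Nat.count_eq_card_filter_range]
    apply Finset.card_le_card
    intro p hp
    obtain ⟨h1, h2⟩ := Finset.mem_filter.1 hp
    simp only [Finset.mem_filter, Finset.mem_range]
    exact ⟨by omega, Nat.prime_of_mem_primeFactors h1⟩
  · have hex : ∀ p, p ∈ L.primeFactors.filter (fun p => ¬ p ≤ T) → ∃ d ∈ D, p ∣ d := by
      intro p hp
      obtain ⟨h1, h2⟩ := Finset.mem_filter.1 hp
      have := prime_pow_dvd_lcm D (e := 1) (Nat.prime_of_mem_primeFactors h1) one_ne_zero hD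
        (by rw [pow_one]; exact Nat.dvd_of_mem_primeFactors h1)
      simpa using this
    choose! f hf1 hf2 using hex
    have hle : (L.primeFactors.filter (fun p => ¬ p ≤ T)).card ≤
        (D.filter fun d => T < d).card := by
      apply Finset.card_le_card_of_injOn f
      · intro p hp
        have hp := Finset.mem_coe.1 hp
        refine Finset.mem_coe.2 (Finset.mem_filter.2 ⟨hf1 p hp, ?_⟩)
        have := Nat.le_of_dvd (Nat.pos_of_ne_zero (hD _ (hf1 p hp))) (hf2 p hp)
        have := (Finset.mem_filter.1 hp).2
        omega
      · intro p hp q hq hpq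
        have hp := Finset.mem_coe.1 hp
        have hq := Finset.mem_coe.1 hq
        by_contra hne
        obtain ⟨p1, p2⟩ := Finset.mem_filter.1 hp
        obtain ⟨q1, q2⟩ := Finset.mem_filter.1 hq
        have hcop := (Nat.coprime_primes (Nat.prime_of_mem_primeFactors p1)
          (Nat.prime_of_mem_primeFactors q1)).2 hne
        have := hcop.mul_dvd_of_dvd_of_dvd (hf2 p hp) (hpq ▸ hf2 q hq)
        have := Nat.le_of_dvd (Nat.pos_of_ne_zero (hD _ (hf1 p hp))) this
        have := hdn _ (hf1 p hp)
        have : T * T < p * q := Nat.mul_lt_mul'' (by omega) (by omega)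
        omega
    refine hle.trans ?_
    rw [Nat.le_div_iff_mul_le hT1]
    calc (D.filter fun d => T < d).card * T = ∑ d ∈ D.filter fun d => T < d, T := by simp
      _ ≤ ∑ d ∈ D.filter fun d => T < d, d := by
          apply Finset.sum_le_sum
          intro d hd
          exact (Finset.mem_filter.1 hd).2.le
      _ ≤ ∑ d ∈ D, d := Finset.sum_le_sum_of_subset (Finset.filter_subset _ _)
      _ ≤ n := hsum

/-! ### Growth -/

/-- `f` is at most `exp (O (sqrt (n log n)))` -/
def PB (f : ℕ → ℕ) : Prop := ∃ C : ℝ, 0 ≤ C ∧ ∀ n : ℕ, 2 ≤ n →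
  (f n : ℝ) ≤ Real.exp (C * Real.sqrt (n * Real.log n))

lemma one_le_X {n : ℕ} (hn : 2 ≤ n) : 1 ≤ Real.sqrt (n * Real.log n) := by
  have h2 : (2 : ℝ) ≤ n := by exact_mod_cast hn
  have hl : 0.6931471803 < Real.log 2 := Real.log_two_gt_d9
  have : Real.log 2 ≤ Real.log n := Real.log_le_log (by norm_num) h2
  rw [Real.le_sqrt' (by norm_num)]
  nlinarith

lemma log_le_X {n : ℕ} (hn : 2 ≤ n) : Real.log n ≤ Real.sqrt (n * Real.log n) := by
  have h2 : (2 : ℝ) ≤ n := by exact_mod_cast hn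
  have hl : 0 ≤ Real.log n := Real.log_nonneg (by linarith)
  have : Real.log n ≤ n := by
    have := Real.log_le_sub_one_of_pos (show (0:ℝ) < n by linarith)
    linarith
  apply Real.le_sqrt_of_sq_le
  nlinarith

lemma PB.mono {f g : ℕ → ℕ} (hg : PB g) (h : ∀ n, 2 ≤ n → f n ≤ g n) : PB f := by
  obtain ⟨C, hC, hg⟩ := hg
  refine ⟨C, hC, fun n hn => le_trans ?_ (hg n hn)⟩
  exact_mod_cast h n hn

lemma PB.mul {f g : ℕ → ℕ} (hf : PB f) (hg : PB g) : PB (fun n => f n * g n) := by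
  obtain ⟨C, hC, hf⟩ := hf
  obtain ⟨C', hC', hg⟩ := hg
  refine ⟨C + C', by positivity, fun n hn => ?_⟩
  rw [add_mul, Real.exp_add]
  push_cast
  exact mul_le_mul (hf n hn) (hg n hn) (by positivity) (by positivity)

lemma PB.pow {f : ℕ → ℕ} (hf : PB f) (k : ℕ) : PB (fun n => f n ^ k) := by
  induction k with
  | zero => exact ⟨0, le_rfl, fun n hn => by simp⟩
  | succ k ih => simp only [pow_succ]; exact ih.mul hf

lemma PB.const (k : ℕ) : PB (fun _ => k) := by
  refine ⟨k, by positivity, fun n hn => ?_⟩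
  have h1 := one_le_X hn
  have : (k : ℝ) * 1 ≤ k * Real.sqrt (n * Real.log n) := by gcongr
  have := Real.add_one_le_exp ((k : ℝ) * Real.sqrt (n * Real.log n))
  linarith

lemma PB.id : PB (fun n => n) := by
  refine ⟨1, by positivity, fun n hn => ?_⟩
  have h1 := log_le_X hn
  rw [one_mul, ← Real.log_le_iff_le_exp (by exact_mod_cast (by omega : 0 < n))]
  exact h1

lemma PB.add {f g : ℕ → ℕ} (hf : PB f) (hg : PB g) : PB (fun n => f n + g n) := by
  have h : PB (fun n => (f n + 1) * (g n + 1)) := by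
    have aux : ∀ {f : ℕ → ℕ}, PB f → PB (fun n => f n + 1) := by
      rintro f ⟨C, hC, hf⟩
      have : PB (fun n => f n + 1) := by
        refine ⟨C + 1, by positivity, fun n hn => ?_⟩
        have h1 := one_le_X hn
        have h2 := hf n hn
        have h3 : 1 ≤ Real.exp (C * Real.sqrt (n * Real.log n)) := Real.one_le_exp (by positivity)
        have h4 := Real.add_one_le_exp (Real.sqrt (n * Real.log n))
        rw [add_mul, one_mul, Real.exp_add]
        push_cast
        nlinarith
      exact this
    exact (aux hf).mul (aux hg)
  exact h.mono fun n hn => by nlinarith [Nat.zero_le (f n * g n)]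

/-- the threshold used in the Landau bound -/
noncomputable def Tth (n : ℕ) : ℕ := ⌊3 * Real.sqrt (n * Real.log n)⌋₊

lemma Tth_ge {n : ℕ} (hn : 2 ≤ n) : 2 * Real.sqrt (n * Real.log n) ≤ Tth n := by
  have h1 := one_le_X hn
  have := Nat.lt_floor_add_one (3 * Real.sqrt (n * Real.log n))
  unfold Tth
  linarith

lemma n_le_X_sq {n : ℕ} (hn : 2 ≤ n) : (n : ℝ) ≤ (2 * Real.sqrt (n * Real.log n)) ^ 2 := by
  have h2 : (2 : ℝ) ≤ n := by exact_mod_cast hn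
  have hl : 0.6931471803 < Real.log 2 := Real.log_two_gt_d9
  have : Real.log 2 ≤ Real.log n := Real.log_le_log (by norm_num) h2
  rw [mul_pow, Real.sq_sqrt (by apply mul_nonneg <;> linarith)]
  nlinarith

lemma Tth_sq {n : ℕ} (hn : 2 ≤ n) : n ≤ Tth n * Tth n := by
  have h1 := one_le_X hn
  have h2 := Tth_ge hn
  have h3 := n_le_X_sq hn
  have : (n : ℝ) ≤ Tth n * Tth n := by nlinarith
  exact_mod_cast this

lemma PB.landau : PB (fun n => n ^ (Nat.primeCounting (Tth n) + n / Tth n)) := by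
  refine ⟨37, by norm_num, fun n hn => ?_⟩
  have h1 := one_le_X hn
  have h2 := Tth_ge hn
  have h3 := n_le_X_sq hn
  have hn0 : (2 : ℝ) ≤ n := by exact_mod_cast hn
  have hlog : 0 < Real.log n := Real.log_pos (by linarith)
  have hXsq : Real.sqrt (n * Real.log n) ^ 2 = n * Real.log n := Real.sq_sqrt (by positivity)
  have hT : Tth n = ⌊3 * Real.sqrt (n * Real.log n)⌋₊ := rfl
  set X := Real.sqrt (n * Real.log n) with hX
  set x := 3 * X with hx
  have hx1 : 1 < x := by linarith
  have hpi := Chebyshev.pi_le_log4_mul_div hx1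
  rw [← hT] at hpi
  have hls : Real.log (Real.sqrt x) = Real.log x / 2 := Real.log_sqrt (by linarith)
  have hlx : 0 < Real.log x := Real.log_pos hx1
  have hnx : Real.log n ≤ 2 * Real.log x := by
    have : Real.log (n : ℝ) ≤ Real.log (x ^ 2) := by
      apply Real.log_le_log (by linarith)
      nlinarith
    rwa [Real.log_pow] at this
  have hlog4 : Real.log 4 ≤ 2 := by
    have : Real.log 4 = 2 * Real.log 2 := by
      rw [show (4 : ℝ) = 2 ^ 2 by norm_num, Real.log_pow]; norm_num
    have := Real.log_two_lt_d9
    linarith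
  have hlog4' : 0 < Real.log 4 := Real.log_pos (by norm_num)
  have hsq : Real.sqrt x * Real.sqrt x = x := Real.mul_self_sqrt (by linarith)
  have hsx : 0 < Real.sqrt x := Real.sqrt_pos.2 (by linarith)
  have hb : Real.log x ≤ 2 * Real.sqrt x := by
    have := Real.log_le_sub_one_of_pos hsx
    linarith
  have hA : (Nat.primeCounting (Tth n) : ℝ) * Real.log n ≤ 12 * x := by
    calc (Nat.primeCounting (Tth n) : ℝ) * Real.log n
        ≤ (Real.log 4 * x / (Real.log x / 2) + Real.sqrt x) * (2 * Real.log x) := by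
          rw [hls] at hpi
          apply mul_le_mul hpi hnx hlog.le (by positivity)
      _ = 4 * Real.log 4 * x + 2 * (Real.sqrt x * Real.log x) := by
          field_simp
          ring
      _ ≤ 4 * 2 * x + 2 * (Real.sqrt x * (2 * Real.sqrt x)) := by gcongr
      _ = 12 * x := by linear_combination 4 * hsq
  have hB : ((n / Tth n : ℕ) : ℝ) * Real.log n ≤ X := by
    have hT0 : (0 : ℝ) < Tth n := by linarith
    have : ((n / Tth n : ℕ) : ℝ) ≤ n / X := by
      refine (Nat.cast_div_le).trans ?_
      apply div_le_div_of_nonneg_left (by linarith) (by linarith) (by linarith)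
    calc ((n / Tth n : ℕ) : ℝ) * Real.log n ≤ n / X * Real.log n := by gcongr
      _ = X := by
        field_simp
        linarith
  push_cast
  rw [← Real.log_le_iff_le_exp (by positivity), Real.log_pow]
  push_cast
  rw [add_mul]
  linarith


/-! ### Deterministic automata -/

lemma restrict_dfa {α σ : Type} (M : DFA α σ) (F : Finset σ) (h0 : M.start ∈ F)
    (hs : ∀ s ∈ F, ∀ a, M.step s a ∈ F) : ∃ M' : DFA α F, M'.accepts = M.accepts := by
  let M' : DFA α F :=
    { step := fun s a => ⟨M.step s.1 a, hs s.1 s.2 a⟩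
      start := ⟨M.start, h0⟩
      accept := {s | s.1 ∈ M.accept} }
  refine ⟨M', ?_⟩
  have key : ∀ w : List α, (M'.eval w).1 = M.eval w := by
    intro w
    induction w using List.reverseRecOn with
    | nil => rfl
    | append_singleton w a ih =>
      rw [DFA.eval_append_singleton, DFA.eval_append_singleton, ← ih]
  ext w
  rw [DFA.mem_accepts, DFA.mem_accepts, ← key]
  rfl

/-- reduction of a counter, with preperiod `T` and period `L` -/
def red (T L x : ℕ) : ℕ := if x < T then x else T + (x - T) % L

lemma red_of_lt {T L x : ℕ} (h : x < T) : red T L x = x := by simp [red, h]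

lemma red_of_ge {T L x : ℕ} (h : T ≤ x) : T ≤ red T L x ∧ red T L x ≡ x [MOD L] := by
  have h' : ¬ x < T := by omega
  simp only [red, h', if_false]
  refine ⟨by omega, ?_⟩
  have : (x - T) % L ≡ x - T [MOD L] := Nat.mod_modEq _ _
  have := Nat.ModEq.add_left T this
  rwa [Nat.add_sub_cancel' h] at this

lemma red_succ (T L x : ℕ) : red T L (red T L x + 1) = red T L (x + 1) := by
  by_cases h : x < T
  · rw [red_of_lt h]
  · have h1 : ¬ x + 1 < T := by omega
    have h2 : ¬ (T + (x - T) % L + 1 < T) := by omega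
    simp only [red, h, h1, h2, if_false]
    congr 1
    rw [show T + (x - T) % L + 1 - T = (x - T) % L + 1 by omega,
      show x + 1 - T = (x - T) + 1 by omega, Nat.mod_add_mod]

lemma red_lt {T L : ℕ} (hL : 1 ≤ L) (x : ℕ) : red T L x < T + L := by
  unfold red
  split_ifs with h
  · omega
  · have := Nat.mod_lt (x - T) hL
    omega

lemma red_eq_of_lt {T L x : ℕ} (h : red T L x < T) : red T L x = x := by
  by_cases hx : x < T
  · exact red_of_lt hx
  · have := (red_of_ge (L := L) (by omega : T ≤ x)).1
    omega

lemma red_eq_zero {T L x : ℕ} (hT : 1 ≤ T) : red T L x = 0 ↔ x = 0 := by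
  constructor
  · intro h
    have := red_eq_of_lt (T := T) (L := L) (x := x) (by omega)
    omega
  · rintro rfl
    exact red_of_lt (by omega)

lemma eq_single {m : ℕ} {v : Fin m → ℕ} {a : Fin m} (h : ∀ b, b ≠ a → v b = 0) :
    v = Pi.single a (v a) := by
  funext b
  by_cases hb : b = a
  · subst hb; simp
  · simp [hb, h b hb]

lemma finite_unary_dfa {m : ℕ} {σ : Type} [Fintype σ] (A : NFA (Fin m) σ) (T L : ℕ)
    (hT : 1 ≤ T) (hL : 1 ≤ L) (hTn : 4 * Fintype.card σ ^ 2 ≤ T)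
    (hdiv : ∀ a, ∀ d ∈ Dset (fun p q => q ∈ A.step p a), d ∣ L) :
    ∃ (σ' : Type) (_ : Fintype σ') (B : DFA (Fin m) σ'), Fintype.card σ' = (T + L) ^ m ∧
      parikhImage B.accepts ⊆ parikhImage A.accepts ∧
      ∀ v ∈ parikhImage A.accepts, (wt v < T ∨ ∃ a, ∀ b, b ≠ a → v b = 0) →
        v ∈ parikhImage B.accepts := by
  classical
  let M : DFA (Fin m) (Fin m → ℕ) :=
    { step := fun y a => Function.update y a (red T L (y a + 1))
      start := 0
      accept := {y | y ∈ parikhImage A.accepts ∧ (wt y < T ∨ ∃ a, ∀ b, b ≠ a → y b = 0)} }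
  have hev : ∀ w, M.eval w = fun i => red T L (parikh w i) := by
    intro w
    induction w using List.reverseRecOn with
    | nil =>
      funext i
      rw [parikh_nil]
      exact ((red_eq_zero hT).2 rfl).symm
    | append_singleton w a ih =>
      rw [DFA.eval_append_singleton, ih]
      funext i
      by_cases hi : i = a
      · subst hi
        simp [M, parikh_append, parikh_cons, parikh_nil, red_succ]
      · simp [M, parikh_append, parikh_cons, parikh_nil, hi]
  have huni : ∀ (a : Fin m) (x : ℕ),
      (Pi.single a (red T L x) : Fin m → ℕ) ∈ parikhImage A.accepts ↔
        (Pi.single a x : Fin m → ℕ) ∈ parikhImage A.accepts := by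
    intro a x
    by_cases hx : x < T
    · rw [red_of_lt hx]
    · obtain ⟨h1, h2⟩ := red_of_ge (L := L) (by omega : T ≤ x)
      rw [unary_mem_iff, unary_mem_iff]
      constructor
      · exact W.periodic (hdiv a) _ _ (by omega) (by omega) h2
      · exact W.periodic (hdiv a) _ _ (by omega) (by omega) h2.symm
  have hcl : ∀ (v : Fin m → ℕ) (a : Fin m), (∀ b, b ≠ a → v b = 0) →
      (fun i => red T L (v i)) = Pi.single a (red T L (v a)) := by
    intro v a h
    apply eq_single (v := fun i => red T L (v i))
    intro b hb
    exact (red_eq_zero hT).2 (h b hb)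
  obtain ⟨M', hM'⟩ := restrict_dfa M (Fintype.piFinset fun _ => Finset.range (T + L))
    (by simp [M]; omega)
    (by
      intro y hy a
      rw [Fintype.mem_piFinset] at hy ⊢
      intro i
      by_cases hi : i = a
      · subst hi
        simpa [M] using red_lt hL _
      · simpa [M, hi] using hy i)
  refine ⟨_, inferInstance, M', ?_, ?_, ?_⟩
  · simp
  · rw [hM']
    rintro _ ⟨w, hw, rfl⟩
    obtain ⟨h1, h2⟩ := (show M.eval w ∈ M.accept from hw)
    rw [hev] at h1 h2
    rcases h2 with h2 | ⟨a, ha⟩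
    · have : (fun i => red T L (parikh w i)) = parikh w := by
        funext i
        apply red_eq_of_lt
        exact lt_of_le_of_lt (le_wt (fun i => red T L (parikh w i)) i) h2
      rwa [this] at h1
    · have hz : ∀ b, b ≠ a → parikh w b = 0 := fun b hb => (red_eq_zero hT).1 (ha b hb)
      rw [hcl _ a hz, huni] at h1
      rwa [eq_single hz]
  · rw [hM']
    rintro v hv hc
    obtain ⟨w, rfl⟩ := exists_word v
    refine ⟨w, ?_, rfl⟩
    change M.eval w ∈ M.accept
    rw [hev]
    rcases hc with h | ⟨a, ha⟩
    · have : (fun i => red T L (parikh w i)) = parikh w := by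
        funext i
        exact red_of_lt ((le_wt _ i).trans_lt h)
      rw [this]
      exact ⟨hv, Or.inl h⟩
    · refine ⟨?_, Or.inr ⟨a, fun b hb => (red_eq_zero hT).2 (ha b hb)⟩⟩
      rw [hcl _ a ha, huni, ← eq_single ha]
      exact hv

/-- states of the automaton reading words `a^i b ...`, where `i` codes a linear set -/
inductive CS (m : ℕ) (P : Type) : Type
  | start : CS m P
  | dead : CS m P
  | cnt : Fin m → ℕ → CS m P
  | run : P → (Fin m → ℕ) → CS m P

open Classical in
/-- transition function of the code automaton -/
noncomputable def codeStep {m : ℕ} {P : Type} (K : ℕ) (idx : P → ℕ) (base : P → Fin m → ℕ)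
    (G : P → Fin m → Fin m → ℕ) : CS m P → Fin m → CS m P
  | CS.start, a => CS.cnt a 1
  | CS.dead, _ => CS.dead
  | CS.cnt a i, b =>
      if b = a then (if i + 1 ≤ K then CS.cnt a (i + 1) else CS.dead)
      else if h : ∃ p, idx p + 1 = i ∧ i ≤ base p a ∧ 1 ≤ base p b then
        CS.run h.choose (base h.choose - Pi.single a i - Pi.single b 1)
      else CS.dead
  | CS.run p r, d =>
      if r d ≠ 0 then CS.run p (r - Pi.single d 1)
      else if r = 0 ∧ G p d d ≠ 0 then CS.run p (G p d - Pi.single d 1)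
      else CS.dead

lemma single_sub {m : ℕ} {r : Fin m → ℕ} {d : Fin m} (h : r d ≠ 0) :
    Pi.single d 1 + (r - Pi.single d 1) = r := by
  funext j
  by_cases hj : j = d
  · subst hj; simp; omega
  · simp [hj]

lemma code_dfa {m : ℕ} {P : Type} [Fintype P] (base : P → Fin m → ℕ)
    (G : P → Fin m → Fin m → ℕ) (Q : ℕ) (hb : ∀ p i, base p i ≤ Q) (hG : ∀ p d i, G p d i ≤ Q)
    (hGd : ∀ p d, G p d = 0 ∨ G p d d ≠ 0)
    (hcode : ∀ p, ∃ a b, b ≠ a ∧ Fintype.card P ≤ base p a ∧ 1 ≤ base p b) :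
    ∃ (σ' : Type) (_ : Fintype σ') (B : DFA (Fin m) σ'),
      Fintype.card σ' ≤ 2 + m * (Fintype.card P + 2) + Fintype.card P * (Q + 1) ^ m ∧
      parikhImage B.accepts = {v | ∃ (p : P) (κ : Fin m → ℕ), v = base p + ∑ d, κ d • G p d} := by
  classical
  set K := Fintype.card P with hK
  let idx : P → ℕ := fun p => (Fintype.equivFin P p : ℕ)
  have hidx : ∀ p q, idx p = idx q → p = q := fun p q h =>
    (Fintype.equivFin P).injective (Fin.ext h)
  have hidxlt : ∀ p, idx p < K := fun p => (Fintype.equivFin P p).2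
  let M : DFA (Fin m) (CS m P) :=
    { step := codeStep K idx base G
      start := CS.start
      accept := {s | ∃ p, s = CS.run p 0} }
  have hMs : ∀ s a, M.step s a = codeStep K idx base G s a := fun _ _ => rfl
  let F : Finset (CS m P) :=
    ({CS.start, CS.dead} ∪ (Finset.univ ×ˢ Finset.range (K + 2)).image fun x => CS.cnt x.1 x.2) ∪
      (Finset.univ ×ˢ (Fintype.piFinset fun _ => Finset.range (Q + 1))).image
        fun x => CS.run x.1 x.2
  have hF1 : CS.start ∈ F := by simp [F]
  have hF2 : CS.dead ∈ F := by simp [F]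
  have hF3 : ∀ a i, CS.cnt a i ∈ F ↔ i < K + 2 := by
    intro a i
    simp [F]
  have hF4 : ∀ p r, CS.run p r ∈ F ↔ ∀ j, r j < Q + 1 := by
    intro p r
    simp [F]
  have hFcard : F.card ≤ 2 + m * (K + 2) + K * (Q + 1) ^ m := by
    refine (Finset.card_union_le _ _).trans (Nat.add_le_add ?_ ?_)
    · refine (Finset.card_union_le _ _).trans (Nat.add_le_add ?_ ?_)
      · exact Finset.card_le_two
      · refine Finset.card_image_le.trans ?_
        simp
    · refine Finset.card_image_le.trans ?_
      simp [hK]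
  obtain ⟨M', hM'⟩ := restrict_dfa M F hF1 (by
    intro s hs a
    change codeStep K idx base G s a ∈ F
    cases s with
    | start => exact (hF3 _ _).2 (by omega)
    | dead => exact hF2
    | cnt c i =>
      simp only [codeStep]
      split_ifs with h1 h2 h3
      · exact (hF3 _ _).2 (by omega)
      · exact hF2
      · rw [hF4]
        intro j
        have := hb h3.choose j
        simp only [Pi.sub_apply]
        omega
      · exact hF2
    | run p r =>
      rw [hF4] at hs
      simp only [codeStep]
      split_ifs with h1 h2
      · rw [hF4]
        intro j
        have := hs j
        simp only [Pi.sub_apply]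
        omega
      · rw [hF4]
        intro j
        have := hG p a j
        simp only [Pi.sub_apply]
        omega
      · exact hF2)
  refine ⟨_, inferInstance, M', by simpa using hFcard, ?_⟩
  rw [hM']
  apply Set.Subset.antisymm
  · let Inv : CS m P → (Fin m → ℕ) → Prop := fun s v =>
      match s with
      | CS.start => v = 0
      | CS.dead => True
      | CS.cnt a i => v = Pi.single a i
      | CS.run p r => ∃ κ : Fin m → ℕ, v + r = base p + ∑ d, κ d • G p d
    have hInv : ∀ w, Inv (M.eval w) (parikh w) := by
      intro w
      induction w using List.reverseRecOn with
      | nil => exact parikh_nil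
      | append_singleton w a ih =>
        rw [DFA.eval_append_singleton, parikh_append, parikh_cons, parikh_nil, add_zero]
        change Inv (codeStep K idx base G _ a) _
        generalize M.eval w = s at ih
        generalize parikh w = v at ih
        cases s with
        | start =>
          change v = 0 at ih
          subst ih
          exact zero_add _
        | dead => trivial
        | cnt c i =>
          change v = Pi.single c i at ih
          subst ih
          simp only [codeStep]
          split_ifs with h1 h2 h3
          · subst h1
            exact (Pi.single_add _ _ _).symm
          · trivial
          · refine ⟨0, ?_⟩
            obtain ⟨-, h4, h5⟩ := h3.choose_spec
            funext j
            simp only [Pi.add_apply, Pi.sub_apply, Pi.zero_apply, zero_smul,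
              Finset.sum_const_zero, add_zero]
            by_cases hjc : j = c
            · subst hjc
              have : j ≠ a := fun e => h1 e.symm
              simp [this]; omega
            · by_cases hja : j = a
              · subst hja
                simp [hjc]; omega
              · simp [hjc, hja]
          · trivial
        | run p r =>
          obtain ⟨κ, hκ⟩ := ih
          simp only [codeStep]
          split_ifs with h1 h2
          · refine ⟨κ, ?_⟩
            rw [add_assoc, single_sub h1, hκ]
          · refine ⟨κ + Pi.single a 1, ?_⟩
            rw [add_assoc, single_sub h2.2]
            rw [h2.1, add_zero] at hκ
            rw [hκ, add_assoc]
            congr 1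
            simp [add_smul, Finset.sum_add_distrib, Pi.single_apply, ite_smul]
          · trivial
    rintro _ ⟨w, ⟨p, hp⟩, rfl⟩
    have := hInv w
    change M.eval w = _ at hp
    rw [hp] at this
    obtain ⟨κ, hκ⟩ := this
    exact ⟨p, κ, by simpa using hκ⟩
  · rintro _ ⟨p, κ, rfl⟩
    have hrun : ∀ (u : List (Fin m)) (r : Fin m → ℕ), parikh u = r →
        M.evalFrom (CS.run p r) u = CS.run p 0 := by
      intro u
      induction u with
      | nil =>
        intro r hr
        rw [← hr, parikh_nil]
        rfl
      | cons d u ih =>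
        intro r hr
        rw [parikh_cons] at hr
        have h1 : r d ≠ 0 := by
          rw [← hr]; simp
        rw [DFA.evalFrom_cons]
        have : M.step (CS.run p r) d = CS.run p (r - Pi.single d 1) := by
          rw [hMs]
          simp only [codeStep]
          rw [if_pos h1]
        rw [this]
        apply ih
        rw [← hr]
        simp
    let S : AddSubmonoid (Fin m → ℕ) :=
      { carrier := {v | ∃ w, M.evalFrom (CS.run p 0) w = CS.run p 0 ∧ parikh w = v}
        zero_mem' := ⟨[], rfl, parikh_nil⟩
        add_mem' := by
          rintro _ _ ⟨w, hw, rfl⟩ ⟨w', hw', rfl⟩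
          exact ⟨w ++ w', by rw [DFA.evalFrom_of_append, hw, hw'], parikh_append _ _⟩ }
    have hS : ∑ d, κ d • G p d ∈ S := by
      refine sum_mem fun d _ => nsmul_mem ?_ _
      rcases hGd p d with h | h
      · rw [h]; exact S.zero_mem
      · obtain ⟨u, hu⟩ := exists_word (G p d - Pi.single d 1)
        refine ⟨d :: u, ?_, by rw [parikh_cons, hu, single_sub h]⟩
        rw [DFA.evalFrom_cons]
        have : M.step (CS.run p 0) d = CS.run p (G p d - Pi.single d 1) := by
          rw [hMs]
          simp only [codeStep]
          rw [if_neg (by simp), if_pos ⟨trivial, h⟩]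
        rw [this]
        exact hrun _ _ hu
    obtain ⟨w2, hw2, hw2'⟩ := hS
    obtain ⟨a, b, hab, ha, hb1⟩ := hcode p
    have hcnt : ∀ i, i < K → M.eval (List.replicate (i + 1) a) = CS.cnt a (i + 1) := by
      intro i
      induction i with
      | zero => intro _; rfl
      | succ i ih =>
        intro hi
        rw [List.replicate_succ', DFA.eval_append_singleton, ih (by omega)]
        rw [hMs]
        simp only [codeStep]
        rw [if_pos trivial, if_pos (by omega)]
    have hlt := hidxlt p
    have hstep : M.step (CS.cnt a (idx p + 1)) b =
        CS.run p (base p - Pi.single a (idx p + 1) - Pi.single b 1) := by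
      have h : ∃ q, idx q + 1 = idx p + 1 ∧ idx p + 1 ≤ base q a ∧ 1 ≤ base q b :=
        ⟨p, rfl, by omega, hb1⟩
      rw [hMs]
      simp only [codeStep]
      rw [if_neg hab, dif_pos h]
      have : h.choose = p := hidx _ _ (by have := h.choose_spec.1; omega)
      rw [this]
    obtain ⟨u, hu⟩ := exists_word (base p - Pi.single a (idx p + 1) - Pi.single b 1)
    refine ⟨(List.replicate (idx p + 1) a ++ [b]) ++ (u ++ w2), ⟨p, ?_⟩, ?_⟩
    · rw [DFA.evalFrom_of_append]
      have : M.evalFrom M.start (List.replicate (idx p + 1) a ++ [b]) =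
          CS.run p (base p - Pi.single a (idx p + 1) - Pi.single b 1) := by
        have := M.eval_append_singleton (List.replicate (idx p + 1) a) b
        rw [hcnt _ hlt, hstep] at this
        exact this
      rw [this, DFA.evalFrom_of_append, hrun _ _ hu, hw2]
    · rw [parikh_append, parikh_append, parikh_append, hw2', ← add_assoc, hu]
      congr 1
      have hrep : parikh (List.replicate (idx p + 1) a) = Pi.single a (idx p + 1) := by
        funext j
        by_cases hj : j = a
        · subst hj; simp [parikh]
        · have : a ≠ j := fun e => hj e.symm
          simp [parikh, List.count_replicate, hj, this]
      rw [hrep, parikh_cons, parikh_nil, add_zero]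
      funext j
      simp only [Pi.add_apply, Pi.sub_apply]
      by_cases hja : j = a
      · subst hja
        have : j ≠ b := fun e => hab e.symm
        simp [this]; omega
      · by_cases hjb : j = b
        · subst hjb
          simp [hja]; omega
        · simp [hja, hjb]

/-! ### Putting everything together -/

/-- bound for the shifted offsets -/
def Nb1 (m n : ℕ) : ℕ := Nbd m n + n

/-- bound for the number of linear sets -/
def Rb (m n : ℕ) : ℕ := (Nb1 m n + 1) ^ m * ((n + 1) ^ m) ^ m * m

/-- threshold for the finite part -/
def Thr (m n : ℕ) : ℕ := Nbd m n + m * (Rb m n * n) + 4 * n ^ 2 + 1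

/-- Landau-type bound -/
noncomputable def lam (n : ℕ) : ℕ := n ^ (Nat.primeCounting (Tth n) + n / Tth n)

/-- bound for the number of states -/
noncomputable def stateBound (m n : ℕ) : ℕ := (Thr m n + lam n ^ m) ^ m *
  (2 + m * (Rb m n + 2) + Rb m n * (Nb1 m n + Rb m n * n + n + 1) ^ m)

lemma PB.stateBound (m : ℕ) : PB (stateBound m) := by
  have hN : PB (Nbd m) := by
    have h1 : PB fun n => (n + 1) ^ m := (PB.id.add (PB.const 1)).pow m
    exact (PB.id.mul PB.id).add (h1.mul (((h1.mul PB.id).pow m).mul PB.id))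
  have hN1 : PB (Nb1 m) := hN.add PB.id
  have hR : PB (Rb m) :=
    (((hN1.add (PB.const 1)).pow m).mul
      (((PB.id.add (PB.const 1)).pow m).pow m)).mul (PB.const m)
  have hT : PB (Thr m) :=
    ((hN.add ((PB.const m).mul (hR.mul PB.id))).add
      ((PB.const 4).mul (PB.id.pow 2))).add (PB.const 1)
  have hl : PB lam := PB.landau
  exact ((hT.add (hl.pow m)).pow m).mul
    (((PB.const 2).add ((PB.const m).mul (hR.add (PB.const 2)))).add
      (hR.mul ((((hN1.add (hR.mul PB.id)).add PB.id).add (PB.const 1)).pow m)))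

lemma sum_shift {m : ℕ} (G : Fin m → Fin m → ℕ) (κ : Fin m → ℕ) (j : Fin m) (k : ℕ)
    (h : k ≤ κ j) : ∑ d, κ d • G d = k • G j + ∑ d, (κ - (Pi.single j k : Fin m → ℕ)) d • G d := by
  have : κ = Pi.single j k + (κ - Pi.single j k) := by
    funext i
    by_cases hi : i = j
    · subst hi; simp; omega
    · simp [hi]
  conv_lhs => rw [this]
  simp only [Pi.add_apply, add_smul, Finset.sum_add_distrib]
  congr 1
  simp [Pi.single_apply, ite_smul]

lemma nonunary_decomp {m : ℕ} {σ : Type} [Fintype σ] (A : NFA (Fin m) σ) (n : ℕ) (hn : 1 ≤ n)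
    (hcard : Fintype.card σ = n) {v : Fin m → ℕ} (hv : v ∈ parikhImage A.accepts)
    (hwt : Thr m n ≤ wt v) (hun : ¬ ∃ a, ∀ b, b ≠ a → v b = 0) :
    ∃ (c : Fin m → ℕ) (G : Fin m → Fin m → ℕ) (κ : Fin m → ℕ) (j : Fin m),
      v = (c + Rb m n • G j) + ∑ d, κ d • G d ∧ wt c ≤ Nb1 m n ∧
      (∀ d, wt (G d) ≤ n ∧ (G d = 0 ∨ G d d ≠ 0)) ∧
      (∀ κ' : Fin m → ℕ, c + ∑ d, κ' d • G d ∈ parikhImage A.accepts) ∧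
      G j ≠ 0 ∧ ∃ b, b ≠ j ∧ c b ≠ 0 := by
  classical
  obtain ⟨c, G, κ, hve, hc, hG, hcone⟩ := semilinear A n hn hcard hv
  have hj : ∃ j, G j ≠ 0 ∧ Rb m n + 1 ≤ κ j := by
    by_contra! hcon
    have h1 : ∀ d, wt (κ d • G d) ≤ Rb m n * n := by
      intro d
      rw [wt_smul]
      by_cases h0 : G d = 0
      · rw [h0, wt_zero]; simp
      · have := hcon d h0
        exact Nat.mul_le_mul (by omega) (hG d).1
    have h2 : wt v ≤ Nbd m n + m * (Rb m n * n) := by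
      rw [hve, wt_add, wt_sum]
      refine Nat.add_le_add hc ((Finset.sum_le_sum fun d _ => h1 d).trans ?_)
      simp
    unfold Thr at hwt
    omega
  obtain ⟨j, hj0, hjκ⟩ := hj
  push Not at hun
  obtain ⟨b, hbj, hb⟩ := hun j
  suffices h : ∃ (c' κ1 : Fin m → ℕ), v = c' + ∑ d, κ1 d • G d ∧ wt c' ≤ Nb1 m n ∧ c' b ≠ 0 ∧
      Rb m n ≤ κ1 j ∧ ∀ κ' : Fin m → ℕ, c' + ∑ d, κ' d • G d ∈ parikhImage A.accepts by
    obtain ⟨c', κ1, h1, h2, h3, h4, h5⟩ := h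
    refine ⟨c', G, κ1 - Pi.single j (Rb m n), j, ?_, h2, hG, h5, hj0, b, hbj, h3⟩
    rw [h1, sum_shift G κ1 j _ h4, add_assoc]
  by_cases hcb : c b = 0
  · have : ∃ d, κ d ≠ 0 ∧ G d b ≠ 0 := by
      by_contra! hcon
      apply hb
      rw [hve]
      simp only [Pi.add_apply, hcb, Finset.sum_apply, Pi.smul_apply, smul_eq_mul, zero_add]
      apply Finset.sum_eq_zero
      intro d _
      by_cases hd : κ d = 0
      · simp [hd]
      · simp [hcon d hd]
    obtain ⟨d, hd1, hd2⟩ := this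
    refine ⟨c + G d, κ - Pi.single d 1, ?_, ?_, ?_, ?_, ?_⟩
    · rw [hve, sum_shift G κ d 1 (by omega), one_smul, add_assoc]
    · rw [wt_add]
      exact Nat.add_le_add hc (hG d).1
    · simp only [Pi.add_apply]; omega
    · simp only [Pi.sub_apply]
      by_cases hjd : j = d
      · subst hjd; simp; omega
      · simp [hjd]; omega
    · intro κ'
      have := hcone (κ' + Pi.single d 1)
      rw [sum_shift G _ d 1 (by simp), one_smul, ← add_assoc] at this
      simpa using this
  · exact ⟨c, κ, hve, by unfold Nb1; omega, hcb, by omega, hcone⟩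

lemma core_bound (m : ℕ) (n : ℕ) (hn : 2 ≤ n) (σ : Type) [Fintype σ]
    (hcard : Fintype.card σ = n) (A : NFA (Fin m) σ) :
    ∃ (σ' : Type) (_ : Fintype σ') (B : DFA (Fin m) σ'),
      Fintype.card σ' ≤ stateBound m n ∧ parikhImage B.accepts = parikhImage A.accepts := by
  classical
  let D : Fin m → Finset ℕ := fun a => Dset (fun p q => q ∈ A.step p a)
  have hD0 : ∀ a, ∀ d ∈ D a, d ≠ 0 := by
    intro a d hd
    exact (Finset.mem_filter.1 hd).2
  let L : ℕ := ∏ a, (D a).lcm id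
  have hL1 : 1 ≤ L := by
    apply Nat.pos_of_ne_zero
    rw [Ne, Finset.prod_eq_zero_iff]
    rintro ⟨a, -, ha⟩
    rw [Finset.lcm_eq_zero_iff] at ha
    obtain ⟨x, hx, hx0⟩ := ha
    exact hD0 a x hx hx0
  have hL2 : L ≤ lam n ^ m := by
    have : L ≤ ∏ _a : Fin m, lam n := by
      apply Finset.prod_le_prod'
      intro a _
      apply lcm_bound _ _ _ (by omega) (Tth_sq hn) (hD0 a)
      rw [← hcard]
      exact sum_Dset
    simpa using this
  have hdiv : ∀ a, ∀ d ∈ D a, d ∣ L := fun a d hd =>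
    (Finset.dvd_lcm (f := id) hd).trans (Finset.dvd_prod_of_mem _ (Finset.mem_univ a))
  obtain ⟨σ1, i1, B1, hB1c, hB1s, hB1⟩ := finite_unary_dfa A (Thr m n) L
    (by unfold Thr; omega) hL1 (by rw [hcard]; unfold Thr; omega) hdiv
  let X := (Fin m → Fin (Nb1 m n + 1)) × (Fin m → Fin m → Fin (n + 1)) × Fin m
  let cc : X → Fin m → ℕ := fun x i => x.1 i
  let GG : X → Fin m → Fin m → ℕ := fun x d i => x.2.1 d i
  let jj : X → Fin m := fun x => x.2.2
  let P := {x : X // (∀ d, GG x d = 0 ∨ GG x d d ≠ 0) ∧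
    (∀ κ' : Fin m → ℕ, cc x + ∑ d, κ' d • GG x d ∈ parikhImage A.accepts) ∧
    GG x (jj x) ≠ 0 ∧ ∃ b, b ≠ jj x ∧ cc x b ≠ 0}
  have hPcard : Fintype.card P ≤ Rb m n := by
    refine (Fintype.card_subtype_le _).trans ?_
    simp only [X, Fintype.card_prod, Fintype.card_fun, Fintype.card_fin, Rb]
    rw [mul_assoc]
  have hcc : ∀ x i, cc x i ≤ Nb1 m n := fun x i => Nat.lt_succ_iff.1 (x.1 i).2
  have hGG : ∀ x d i, GG x d i ≤ n := fun x d i => Nat.lt_succ_iff.1 (x.2.1 d i).2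
  obtain ⟨σ2, i2, B2, hB2c, hB2⟩ := code_dfa (P := P)
    (fun p => cc p.1 + Rb m n • GG p.1 (jj p.1)) (fun p => GG p.1) (Nb1 m n + Rb m n * n + n)
    (by
      intro p i
      have h1 := hcc p.1 i
      have h2 := Nat.mul_le_mul_left (Rb m n) (hGG p.1 (jj p.1) i)
      simp only [Pi.add_apply, Pi.smul_apply, smul_eq_mul]
      omega)
    (by
      intro p d i
      have := hGG p.1 d i
      omega)
    (fun p d => p.2.1 d)
    (by
      intro p
      obtain ⟨h1, -, h3, b, hb, hb0⟩ := p.2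
      refine ⟨jj p.1, b, hb, ?_, ?_⟩
      · have h4 : 1 ≤ GG p.1 (jj p.1) (jj p.1) :=
          Nat.pos_of_ne_zero ((h1 (jj p.1)).resolve_left h3)
        have h5 := Nat.mul_le_mul_left (Rb m n) h4
        simp only [Pi.add_apply, Pi.smul_apply, smul_eq_mul]
        omega
      · simp only [Pi.add_apply]
        omega)
  refine ⟨σ1 × σ2, inferInstance, B1.union B2, ?_, ?_⟩
  · rw [Fintype.card_prod, hB1c]
    unfold stateBound
    gcongr
    refine hB2c.trans ?_
    gcongr
  · rw [DFA.accepts_union]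
    have hun : parikhImage (B1.accepts + B2.accepts) =
        parikhImage B1.accepts ∪ parikhImage B2.accepts := Set.image_union _ _ _
    rw [hun]
    apply Set.Subset.antisymm
    · apply Set.union_subset hB1s
      rw [hB2]
      rintro _ ⟨p, κ, rfl⟩
      have := p.2.2.1 (κ + Pi.single (jj p.1) (Rb m n))
      rw [sum_shift _ _ (jj p.1) (Rb m n) (by simp), ← add_assoc] at this
      simpa using this
    · intro v hv
      by_cases hc : wt v < Thr m n ∨ ∃ a, ∀ b, b ≠ a → v b = 0
      · exact Or.inl (hB1 v hv hc)
      · right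
        push Not at hc
        obtain ⟨c, G, κ, j, h1, h2, h3, h4, h5, h6⟩ := nonunary_decomp A n (by omega) hcard hv
          hc.1 (by push Not; exact hc.2)
        let x : X := (fun i => ⟨c i, Nat.lt_succ_iff.2 ((le_wt c i).trans h2)⟩,
          fun d i => ⟨G d i, Nat.lt_succ_iff.2 ((le_wt (G d) i).trans (h3 d).1)⟩, j)
        have hx1 : cc x = c := rfl
        have hx2 : GG x = G := rfl
        have hx3 : jj x = j := rfl
        rw [hB2]
        exact ⟨⟨x, fun d => (h3 d).2, h4, h5, h6⟩, κ, h1⟩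

/-- For every `m ≥ 1` there is a constant `C > 0` such that every
`n`-state NFA (with `n ≥ 2`) over an alphabet of `m` letters admits a Parikh equivalent
DFA with at most `e^{C·√(n·ln n)}` states. -/
theorem nfa_to_parikh_equivalent_dfa (m : ℕ) (hm : 1 ≤ m) :
    ∃ C : ℝ, 0 < C ∧
      ∀ n : ℕ, 2 ≤ n →
      ∀ (σ : Type) [Fintype σ], Fintype.card σ = n →
      ∀ A : NFA (Fin m) σ,
      ∃ (σ' : Type) (_ : Fintype σ') (B : DFA (Fin m) σ'),
        (Fintype.card σ' : ℝ) ≤ Real.exp (C * Real.sqrt (n * Real.log n)) ∧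
        parikhImage B.accepts = parikhImage A.accepts := by
  obtain ⟨C, hC, h⟩ := PB.stateBound m
  refine ⟨C + 1, by linarith, fun n hn σ _ hcard A => ?_⟩
  obtain ⟨σ', i', B, hB, hBA⟩ := core_bound m n hn σ hcard A
  refine ⟨σ', i', B, ?_, hBA⟩
  have h1 : (Fintype.card σ' : ℝ) ≤ stateBound m n := by exact_mod_cast hB
  refine h1.trans ((h n hn).trans (Real.exp_le_exp.2 ?_))
  have := Real.sqrt_nonneg ((n : ℝ) * Real.log n)
  nlinarith
end
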